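/- arXiv:math/0512173 — 2 statements merged into one kernel-verified Lean document; each statement's English description precedes it below -/
import Mathlib

section
/- Let n ≥ 1 and i be integers with 0 ≤ i < n, let k ∈ ℕ, and let a be a function on ℝⁿ∖{0} of the form a(ξ) = |ξ|^{−i} Σ_{l=0}^{k} (log|ξ|)^l a_l(ξ/|ξ|) with a_0,…,a_k continuous on the unit sphere S^{n−1}. Then there exists a polynomial p with complex coefficients of degree at most k such that for every R > 1, ∫_{1/R < |ξ| < R} a(ξ) dξ = R^{n−i} p(log R) − R^{i−n} p(−log R). In particular this quantity has no constant term in its expansion in powers R^{±(n−i)} times powers of log R, so its finite part as R → ∞ vanishes. -/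
/-!
In polar coordinates the integral splits as a sum over `l` of the spherical integral of `a_l`
times the radial integral of `r ^ (d - 1) * (log r) ^ l` over `(1/R, R)`, where `d = n - i > 0`
(`setIntegral_norm_mul_of_homogeneous`). The equation `d * q + q' = X ^ l` has a polynomial
solution `q_l` of degree at most `l` (`exists_log_primitive`), and then `r ^ d * q_l (log r)` is a
primitive of the radial integrand (`integral_pow_mul_log_pow`). Since `log (1/R) = -log R`, the
boundary terms are `R ^ d * q_l (log R) - R ^ (-d) * q_l (-log R)`, so `p` is the sum of the `q_l`
weighted by the spherical integrals.
-/

open MeasureTheory Complex Filter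

noncomputable section

/-- Euclidean space `ℝⁿ`. -/
abbrev Euc (n : ℕ) := EuclideanSpace ℝ (Fin n)

/-- Tempered distributions on `ℝⁿ`. -/
abbrev TempDist (n : ℕ) := SchwartzMap (Euc n) ℂ →L[ℂ] ℂ

/-- `u` is log-homogeneous of order `(m, k)` on `ℝⁿ ∖ {0}`, with components `ul`:
`u(y) = |y|^m ∑_{l≤k} (log|y|)^l u_l(y/|y|)` where the `u_l` are smooth functions of the
direction `y/|y|` (encoded as smooth `0`-homogeneous functions on `ℝⁿ ∖ {0}`). -/
def IsLogHomFunWith (n : ℕ) (m : ℂ) (k : ℕ) (u : Euc n → ℂ)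
    (ul : Fin (k + 1) → Euc n → ℂ) : Prop :=
  (∀ l, ContDiffOn ℝ (⊤ : ℕ∞) (ul l) {y : Euc n | y ≠ 0}) ∧
  (∀ l (t : ℝ), 0 < t → ∀ y : Euc n, y ≠ 0 → ul l (t • y) = ul l y) ∧
  (∀ y : Euc n, y ≠ 0 →
    u y = (‖y‖ : ℂ) ^ m * ∑ l : Fin (k + 1), (Real.log ‖y‖ : ℂ) ^ (l : ℕ) * ul l y)

/-- `u` is a log-homogeneous function of order `(m, k)` on `ℝⁿ ∖ {0}`. -/
def IsLogHomFun (n : ℕ) (m : ℂ) (k : ℕ) (u : Euc n → ℂ) : Prop :=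
  ∃ ul, IsLogHomFunWith n m k u ul

/-- A tempered distribution `U` is log-homogeneous of order `(m, k)` with scaling
components `Uj`: for all `t > 0` and Schwartz `ψ`,
`⟨U, t^{-n} ψ(·/t)⟩ = t^m ∑_{j≤k} (log t)^j ⟨U_j, ψ⟩`. -/
def IsLogHomDistWith (n : ℕ) (m : ℂ) (k : ℕ) (U : TempDist n)
    (Uj : Fin (k + 1) → TempDist n) : Prop :=
  ∀ (t : ℝ), 0 < t → ∀ (ψ φ : SchwartzMap (Euc n) ℂ),
    (∀ y : Euc n, φ y = ((t ^ n)⁻¹ : ℝ) • ψ (t⁻¹ • y)) →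
    U φ = (t : ℂ) ^ m * ∑ j : Fin (k + 1), (Real.log t : ℂ) ^ (j : ℕ) * Uj j ψ

/-- A tempered distribution `U` is log-homogeneous of order `(m, k)`. -/
def IsLogHomDist (n : ℕ) (m : ℂ) (k : ℕ) (U : TempDist n) : Prop :=
  ∃ Uj, IsLogHomDistWith n m k U Uj

/-- Partial derivative in the `i`-th coordinate direction. -/
def pderiv1 (n : ℕ) (i : Fin n) (f : Euc n → ℂ) : Euc n → ℂ :=
  fun x => fderiv ℝ f x (EuclideanSpace.single i 1)

/-- Iterated partial derivative `∂^α` for a multi-index `α ∈ ℕⁿ`. -/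
def multiDeriv (n : ℕ) (α : Fin n → ℕ) (f : Euc n → ℂ) : Euc n → ℂ :=
  ((List.finRange n).foldr (fun i F => (pderiv1 n i)^[α i] ∘ F) id) f

/-- Monomial `y^α = y₁^{α₁} ⋯ y_n^{α_n}`. -/
def multiPow (n : ℕ) (y : Euc n) (α : Fin n → ℕ) : ℂ :=
  ∏ i, ((y i : ℝ) : ℂ) ^ (α i)

/-- Multi-index factorial `α! = α₁! ⋯ α_n!`. -/
def multiFact (n : ℕ) (α : Fin n → ℕ) : ℕ :=
  ∏ i, Nat.factorial (α i)

/-- Integral over the unit sphere `S^{n-1}` with respect to the standard surface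
measure (the measure `volume.toSphere`). -/
def sphereIntegral (n : ℕ) (f : Euc n → ℂ) : ℂ :=
  ∫ θ : Metric.sphere (0 : Euc n) 1, f θ ∂((volume : Measure (Euc n)).toSphere)

/-- The integral in polar coordinates of a radial function times a `0`-homogeneous one, over an
annulus. No integrability is needed: `integral_prod_mul` holds for junk values as well. -/
lemma setIntegral_norm_mul_of_homogeneous (n : ℕ) (hn : 1 ≤ n) (g : ℝ → ℂ) (h : Euc n → ℂ)
    (hhom : ∀ t : ℝ, 0 < t → ∀ y : Euc n, y ≠ 0 → h (t • y) = h y) (R : ℝ) (hR : 0 < R) :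
    ∫ x in {x : Euc n | R⁻¹ < ‖x‖ ∧ ‖x‖ < R}, g ‖x‖ * h x =
      sphereIntegral n h * ∫ r in Set.Ioo R⁻¹ R, ((r ^ (n - 1) : ℝ) : ℂ) * g r := by
  have : Nontrivial (Euc n) := by
    have : Nonempty (Fin n) := ⟨⟨0, hn⟩⟩
    infer_instance
  have hmeas : MeasurableSet {x : Euc n | R⁻¹ < ‖x‖ ∧ ‖x‖ < R} :=
    (measurableSet_lt measurable_const measurable_norm).inter
      (measurableSet_lt measurable_norm measurable_const)
  set G : ℝ → ℂ := (Set.Ioo R⁻¹ R).indicator g with hG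
  have hdim : Module.finrank ℝ (Euc n) = n := finrank_euclideanSpace_fin
  calc
    _ = ∫ x : Euc n, G ‖x‖ * h x := by
      rw [← integral_indicator hmeas]
      congr 1
      ext x
      by_cases hx : R⁻¹ < ‖x‖ ∧ ‖x‖ < R <;> simp [hG, Set.indicator, hx]
    _ = ∫ x : ({(0)}ᶜ : Set (Euc n)), G ‖x.1‖ * h x.1
          ∂((volume : Measure (Euc n)).comap (↑)) := by
      rw [integral_subtype_comap (measurableSet_singleton _).compl fun x ↦ G ‖x‖ * h x,
        restrict_compl_singleton]
    _ = ∫ z, h z.1.1 * G z.2.1 ∂(volume : Measure (Euc n)).toSphere.prod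
          (.volumeIoiPow (Module.finrank ℝ (Euc n) - 1)) := by
      rw [← (volume : Measure (Euc n)).measurePreserving_homeomorphUnitSphereProd.integral_comp
        (Homeomorph.measurableEmbedding _)]
      congr 1
      ext x
      have hx : x.1 ≠ 0 := x.2
      simp only [homeomorphUnitSphereProd_apply_snd_coe, homeomorphUnitSphereProd_apply_fst_coe]
      rw [hhom _ (by positivity) _ hx, mul_comm]
    _ = sphereIntegral n h *
          ∫ r : Set.Ioi (0 : ℝ), G r ∂.volumeIoiPow (Module.finrank ℝ (Euc n) - 1) :=
      integral_prod_mul (fun z : Metric.sphere (0 : Euc n) 1 ↦ h z)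
        (fun r : Set.Ioi (0 : ℝ) ↦ G r)
    _ = _ := by
      rw [hdim]
      congr 1
      simp only [Measure.volumeIoiPow, ENNReal.ofReal]
      rw [integral_withDensity_eq_integral_smul
          ((measurable_subtype_coe.pow_const _).real_toNNReal),
        integral_subtype_comap measurableSet_Ioi fun a ↦ Real.toNNReal (a ^ (n - 1)) • G a,
        ← integral_indicator measurableSet_Ioi, ← integral_indicator measurableSet_Ioo]
      congr 1
      ext r
      by_cases hr : r ∈ Set.Ioo R⁻¹ R
      · have hr0 : 0 < r := (inv_pos.2 hR).trans hr.1
        rw [Set.indicator_of_mem (Set.mem_Ioi.2 hr0), Set.indicator_of_mem hr, hG,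
          Set.indicator_of_mem hr, NNReal.smul_def, Real.coe_toNNReal _ (pow_nonneg hr0.le _),
          Complex.real_smul]
      · rw [Set.indicator_of_notMem hr]
        simp [Set.indicator, hG, hr]

/-- The polynomial ODE `d * q + q' = X ^ l` is solvable in degree at most `l`. -/
lemma exists_log_primitive (d : ℕ) (hd : 0 < d) (l : ℕ) :
    ∃ q : Polynomial ℂ, q.natDegree ≤ l ∧
      Polynomial.C (d : ℂ) * q + Polynomial.derivative q = Polynomial.X ^ l := by
  have hd' : (d : ℂ) ≠ 0 := by exact_mod_cast hd.ne'
  induction l with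
  | zero =>
    refine ⟨Polynomial.C (d : ℂ)⁻¹, by simp, ?_⟩
    rw [← Polynomial.C_mul, mul_inv_cancel₀ hd']
    simp
  | succ l ih =>
    obtain ⟨q, hq, h⟩ := ih
    -- Integrating `r ^ (d - 1) * (log r) ^ (l + 1)` by parts suggests this recursion in `l`.
    refine ⟨Polynomial.C (d : ℂ)⁻¹ * (Polynomial.X ^ (l + 1) - Polynomial.C ((l : ℂ) + 1) * q),
      ?_, ?_⟩
    · refine (Polynomial.natDegree_C_mul_le _ _).trans
        ((Polynomial.natDegree_sub_le _ _).trans (max_le (by simp) ?_))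
      exact (Polynomial.natDegree_C_mul_le _ _).trans (hq.trans l.le_succ)
    · have hc : Polynomial.C (d : ℂ) * Polynomial.C (d : ℂ)⁻¹ = 1 := by
        rw [← Polynomial.C_mul, mul_inv_cancel₀ hd', Polynomial.C_1]
      simp only [Polynomial.derivative_C_mul, Polynomial.derivative_sub,
        Polynomial.derivative_X_pow, Nat.add_sub_cancel]
      push_cast
      rw [← h]
      linear_combination (Polynomial.X ^ (l + 1)) * hc

/-- The radial integral, evaluated with the primitive `r ^ d * q (log r)`. -/
lemma integral_pow_mul_log_pow (d : ℕ) (hd : 0 < d) (l : ℕ) (q : Polynomial ℂ)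
    (hq : Polynomial.C (d : ℂ) * q + Polynomial.derivative q = Polynomial.X ^ l)
    (R : ℝ) (hR : 1 < R) :
    ∫ r in Set.Ioo R⁻¹ R, ((r ^ (d - 1) : ℝ) : ℂ) * (Real.log r : ℂ) ^ l =
      ((R ^ d : ℝ) : ℂ) * q.eval (Real.log R : ℂ) -
        (((R ^ d)⁻¹ : ℝ) : ℂ) * q.eval (-(Real.log R : ℂ)) := by
  have hR0 : 0 < R := by linarith
  have hle : R⁻¹ ≤ R := (inv_le_one_of_one_le₀ hR.le).trans hR.le
  have hpos : ∀ r ∈ Set.uIcc R⁻¹ R, 0 < r := fun r hr ↦ by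
    rw [Set.uIcc_of_le hle] at hr
    exact (inv_pos.2 hR0).trans_le hr.1
  rw [← integral_Ioc_eq_integral_Ioo, ← intervalIntegral.integral_of_le hle]
  rw [intervalIntegral.integral_eq_sub_of_hasDerivAt
    (f := fun r : ℝ ↦ ((r ^ d : ℝ) : ℂ) * q.eval (Real.log r : ℂ))]
  · simp [Real.log_inv]
  · intro r hr
    have hr0 := hpos r hr
    have h1 : HasDerivAt (fun r : ℝ ↦ ((r ^ d : ℝ) : ℂ)) ((d * r ^ (d - 1) : ℝ) : ℂ) r :=
      (hasDerivAt_pow d r).ofReal_comp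
    have h2 : HasDerivAt (fun r : ℝ ↦ q.eval (Real.log r : ℂ))
        ((Polynomial.derivative q).eval (Real.log r : ℂ) * ((r⁻¹ : ℝ) : ℂ)) r :=
      HasDerivAt.comp (h₂ := fun z : ℂ ↦ q.eval z) r (q.hasDerivAt (Real.log r : ℂ))
        (Real.hasDerivAt_log hr0.ne').ofReal_comp
    refine (h1.mul h2).congr_deriv ?_
    have h3 := congrArg (Polynomial.eval (Real.log r : ℂ)) hq
    simp only [Polynomial.eval_add, Polynomial.eval_mul, Polynomial.eval_C,
      Polynomial.eval_pow, Polynomial.eval_X] at h3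
    have hrc : (r : ℂ) ≠ 0 := by exact_mod_cast hr0.ne'
    obtain ⟨e, rfl⟩ : ∃ e, d = e + 1 := ⟨d - 1, by omega⟩
    rw [← h3]
    push_cast
    field_simp
    ring
  · apply ContinuousOn.intervalIntegrable
    refine ContinuousOn.mul (by fun_prop) (ContinuousOn.pow ?_ _)
    exact Complex.continuous_ofReal.comp_continuousOn
      (Real.continuousOn_log.mono fun r hr ↦ (hpos r hr).ne')

/-- For `a(ξ) = |ξ|^{-i} ∑_{l≤k} (log|ξ|)^l a_l(ξ/|ξ|)` with `0 ≤ i < n`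
and the `a_l` continuous on the sphere, there is a polynomial `p` of degree at most `k`
with `∫_{1/R<|ξ|<R} a(ξ) dξ = R^{n-i} p(log R) - R^{i-n} p(-log R)` for all `R > 1`. -/
theorem statement10 (n : ℕ) (hn : 1 ≤ n) (i : ℕ) (hi : i < n) (k : ℕ)
    (a : Euc n → ℂ) (al : Fin (k + 1) → Euc n → ℂ)
    (hcont : ∀ l, ContinuousOn (al l) {y : Euc n | y ≠ 0})
    (hhom : ∀ l (t : ℝ), 0 < t → ∀ y : Euc n, y ≠ 0 → al l (t • y) = al l y)
    (ha : ∀ y : Euc n, y ≠ 0 →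
      a y = (‖y‖ : ℂ) ^ (-(i : ℂ)) * ∑ l : Fin (k + 1), (Real.log ‖y‖ : ℂ) ^ (l : ℕ) * al l y) :
    ∃ p : Polynomial ℂ, p.natDegree ≤ k ∧
      ∀ R : ℝ, 1 < R →
        ∫ ξ in {ξ : Euc n | R⁻¹ < ‖ξ‖ ∧ ‖ξ‖ < R}, a ξ =
          ((R ^ ((n : ℝ) - (i : ℝ)) : ℝ) : ℂ) * p.eval ((Real.log R : ℝ) : ℂ) -
            ((R ^ ((i : ℝ) - (n : ℝ)) : ℝ) : ℂ) * p.eval (-((Real.log R : ℝ) : ℂ)) := by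
  have hd : 0 < n - i := Nat.sub_pos_of_lt hi
  choose q hqdeg hq using exists_log_primitive (n - i) hd
  refine ⟨∑ l : Fin (k + 1), Polynomial.C (sphereIntegral n (al l)) * q l, ?_, fun R hR ↦ ?_⟩
  · exact Polynomial.natDegree_sum_le_of_forall_le _ _ fun l _ ↦
      (Polynomial.natDegree_C_mul_le _ _).trans ((hqdeg l).trans (Nat.lt_succ_iff.1 l.2))
  have hR0 : 0 < R := by linarith
  have hmeas : MeasurableSet {x : Euc n | R⁻¹ < ‖x‖ ∧ ‖x‖ < R} :=
    (measurableSet_lt measurable_const measurable_norm).inter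
      (measurableSet_lt measurable_norm measurable_const)
  let g : ℕ → ℝ → ℂ := fun l r ↦ ((r ^ i : ℝ) : ℂ)⁻¹ * (Real.log r : ℂ) ^ l
  have hint : ∀ l : Fin (k + 1), IntegrableOn (fun x : Euc n ↦ g l ‖x‖ * al l x)
      {x : Euc n | R⁻¹ < ‖x‖ ∧ ‖x‖ < R} := fun l ↦ by
    -- The closed annulus is compact and avoids the origin.
    have hK : IsCompact (Metric.closedBall (0 : Euc n) R ∩ {x | R⁻¹ ≤ ‖x‖}) :=
      (isCompact_closedBall _ _).inter_right (isClosed_le continuous_const continuous_norm)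
    have hne : ∀ x ∈ Metric.closedBall (0 : Euc n) R ∩ {x | R⁻¹ ≤ ‖x‖}, x ≠ 0 := fun x hx ↦
      norm_pos_iff.1 ((inv_pos.2 hR0).trans_le hx.2)
    refine IntegrableOn.mono_set (ContinuousOn.integrableOn_compact hK ?_)
      (fun x hx ↦ ⟨by simpa using hx.2.le, hx.1.le⟩)
    refine ContinuousOn.mul (ContinuousOn.mul (ContinuousOn.inv₀ (by fun_prop) ?_)
      (ContinuousOn.pow ?_ _)) ((hcont l).mono hne)
    · intro x hx
      have := norm_pos_iff.2 (hne x hx)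
      exact_mod_cast (pow_pos this i).ne'
    · exact Complex.continuous_ofReal.comp_continuousOn
        (continuousOn_id.norm.log fun x hx ↦ norm_ne_zero_iff.2 (hne x hx))
  have hradial : ∀ l : ℕ,
      ∫ r in Set.Ioo R⁻¹ R, ((r ^ (n - 1) : ℝ) : ℂ) * g l r =
        ∫ r in Set.Ioo R⁻¹ R, ((r ^ (n - i - 1) : ℝ) : ℂ) * (Real.log r : ℂ) ^ l := fun l ↦ by
    refine setIntegral_congr_fun measurableSet_Ioo fun r hr ↦ ?_
    have hrc : (r : ℂ) ≠ 0 := by exact_mod_cast ((inv_pos.2 hR0).trans hr.1).ne'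
    have : n - 1 = (n - i - 1) + i := by omega
    simp only [g]
    rw [this]
    push_cast
    field_simp
    ring
  have hpow : R ^ ((n : ℝ) - (i : ℝ)) = R ^ (n - i) := by
    rw [← Nat.cast_sub hi.le, Real.rpow_natCast]
  have hpow' : R ^ ((i : ℝ) - (n : ℝ)) = (R ^ (n - i))⁻¹ := by
    rw [← neg_sub, Real.rpow_neg hR0.le, hpow]
  have hexp : ∫ ξ in {ξ : Euc n | R⁻¹ < ‖ξ‖ ∧ ‖ξ‖ < R}, a ξ =
      ∫ ξ in {ξ : Euc n | R⁻¹ < ‖ξ‖ ∧ ‖ξ‖ < R}, ∑ l : Fin (k + 1), g l ‖ξ‖ * al l ξ := by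
    refine setIntegral_congr_fun hmeas fun x hx ↦ ?_
    have hx0 : x ≠ 0 := norm_pos_iff.1 ((inv_pos.2 hR0).trans hx.1)
    simp only [ha x hx0, g, Complex.cpow_neg, Complex.cpow_natCast, Finset.mul_sum,
      Complex.ofReal_pow, mul_assoc]
  rw [hexp, integral_finsetSum _ fun l _ ↦ hint l, hpow, hpow', Polynomial.eval_finsetSum,
    Polynomial.eval_finsetSum, Finset.mul_sum, Finset.mul_sum, ← Finset.sum_sub_distrib]
  refine Finset.sum_congr rfl fun l _ ↦ ?_
  rw [setIntegral_norm_mul_of_homogeneous n hn (g l) (al l) (hhom l) R hR0, hradial,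
    integral_pow_mul_log_pow (n - i) hd l (q l) (hq l) R hR]
  simp only [Polynomial.eval_mul, Polynomial.eval_C]
  ring
end
end

section
/- Let n ≥ 1, m ∈ ℂ with m ∉ {−n−j : j ∈ ℕ}, k ∈ ℕ, and let u be a log-homogeneous function of order (m,k) on ℝⁿ∖{0}, written u(y) = |y|^m Σ_{l=0}^{k} (log|y|)^l u_l(y/|y|) with u_l smooth on S^{n−1}. Fix an integer N with N > −n − Re(m). For a Schwartz function ψ define ⟨U, ψ⟩ := ∫_{|y|>1} u(y)ψ(y) dy + ∫_{|y|<1} u(y) ( ψ(y) − Σ_{|α|<N} ∂^α ψ(0) y^α / α! ) dy + Σ_{|α|<N} Σ_{l=0}^{k} (−1)^l l! ∂^α ψ(0) / ( α! (m+n+|α|)^{l+1} ) · ∫_{S^{n−1}} u_l(θ) θ^α dθ, where α ranges over multi-indices in ℕⁿ. Then both integrals converge absolutely, U is a tempered distribution on ℝⁿ which is log-homogeneous of order (m,k), and ⟨U, ψ⟩ = ∫_{ℝⁿ} u ψ dy for every Schwartz ψ vanishing on a neighbourhood of 0. -/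
/-!
By linearity it suffices to treat one term `w_l(y) = |y|^m (log |y|)^l f(y)` with `f` homogeneous
of degree `0` (`logFun`). For a cut-off radius `R > 0`, let `regPair` be the integral of `w_l`
against the Taylor remainder of `ψ` (Taylor polynomial subtracted for `|y| < R`), plus the finite
part `∑ ∂^α ψ(0) / α! · P_l(R) ∫ f θ^α` of the integral of the subtracted polynomial over
`|y| < R`. Here `P_l = radPrim (m + n + |α|) l` is the primitive of
`r ^ (m + n + |α| - 1) (log r) ^ l` without constant term, which exists because
`m + n + |α| ≠ 0`; its value at `1` is the coefficient `(-1)^l l! / (m + n + |α|)^(l + 1)`.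

*Convergence and continuity.* Along the ray through `y`, the function `t ↦ ψ (t y)` has derivatives
`(∑ y_i ∂_i)^j ψ`, expanded by the multinomial theorem for commuting operators. The one-variable
Taylor estimate thus gives `|ψ - Taylor_N ψ| ≤ C |y| ^ N` with `C` a Schwartz seminorm
(`taylor_bound`), and `N > -n - Re m` makes the integrand dominated by a fixed integrable function
times a seminorm (`integrand_bound`).

*Homogeneity.* Changing `R` alters the integral over an annulus only, and polar coordinates show
that the difference of the values of `P_l` compensates this exactly (`regPair_indep`). The
substitution `y = t x` turns the pairing at radius `1` into pairings at radius `t⁻¹`; the binomial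
expansion of `(log t + log |x|)^l` and the same expansion for `P_l` (`radPrim_scale`) express the
result through the pairings with `w_{l-i}` at radius `t⁻¹`, hence at radius `1` (`regPair_scale`).

*Extension.* If `ψ` vanishes near `0`, all its derivatives at `0` are zero and only `∫ u ψ` is left.
-/

open MeasureTheory Complex Filter

noncomputable section

/-- The Taylor polynomial of `ψ` at `0` of degree `< N`:
`∑_{|α|<N} ∂^α ψ(0) y^α / α!`. -/
def taylorPart (n N : ℕ) (ψ : Euc n → ℂ) (y : Euc n) : ℂ :=
  ∑ j ∈ Finset.range N, ∑ α ∈ Finset.Nat.antidiagonalTuple n j,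
    multiDeriv n α ψ 0 * multiPow n y α / (multiFact n α : ℂ)

/-! ### Taylor's formula in several variables -/

open LineDeriv SchwartzMap

/-- The partial derivative `∂_i` as an operator on Schwartz space. -/
def pdOp (n : ℕ) (i : Fin n) : SchwartzMap (Euc n) ℂ →L[ℂ] SchwartzMap (Euc n) ℂ :=
  lineDerivOpCLM ℂ (SchwartzMap (Euc n) ℂ) (EuclideanSpace.single i (1 : ℝ))

/-- The iterated partial derivative `∂^α` as an operator on Schwartz space. -/
def mdOp (n : ℕ) (α : Fin n → ℕ) : SchwartzMap (Euc n) ℂ →L[ℂ] SchwartzMap (Euc n) ℂ :=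
  ((List.finRange n).map (fun i => pdOp n i ^ α i)).prod

lemma pdOp_pow_coe (n : ℕ) (i : Fin n) (a : ℕ) (ψ : SchwartzMap (Euc n) ℂ) :
    (pderiv1 n i)^[a] (⇑ψ) = ⇑((pdOp n i ^ a) ψ) := by
  induction a with
  | zero => rfl
  | succ a ih =>
    rw [Function.iterate_succ_apply', ih, pow_succ']
    rfl

lemma mdOp_coe (n : ℕ) (α : Fin n → ℕ) (ψ : SchwartzMap (Euc n) ℂ) :
    multiDeriv n α (⇑ψ) = ⇑(mdOp n α ψ) := by
  unfold multiDeriv mdOp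
  induction List.finRange n with
  | nil => rfl
  | cons i L ih =>
    simp only [List.foldr_cons, Function.comp_apply, List.map_cons, List.prod_cons]
    rw [ih, pdOp_pow_coe]
    rfl

lemma pdOp_commute (n : ℕ) (i j : Fin n) : Commute (pdOp n i) (pdOp n j) := by
  ext ψ x
  have hsymm : IsSymmSndFDerivAt ℝ (⇑ψ) x :=
    (ψ.smooth 2).contDiffAt.isSymmSndFDerivAt (by simp)
  have key : ∀ v w : Euc n, fderiv ℝ (fun y => fderiv ℝ ψ y v) x w
      = fderiv ℝ (fderiv ℝ ψ) x w v := by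
    intro v w
    have hd : DifferentiableAt ℝ (fderiv ℝ ψ) x :=
      ((ψ.smooth 2).fderiv_right (m := 1) (by norm_num)).differentiable (by simp) x
    rw [fderiv_clm_apply hd (differentiableAt_const v)]
    simp
  change fderiv ℝ (fun y => fderiv ℝ ψ y _) x _ = fderiv ℝ (fun y => fderiv ℝ ψ y _) x _
  rw [key, key]
  exact hsymm.eq _ _

/-- The directional derivative along `y` is `∑ y_i ∂_i`. -/
lemma lineDeriv_eq_sum (n : ℕ) (y : Euc n) :
    lineDerivOpCLM ℂ (SchwartzMap (Euc n) ℂ) y = ∑ i, ((y i : ℝ) : ℂ) • pdOp n i := by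
  ext ψ x
  have hy : y = ∑ i, y i • EuclideanSpace.single i (1 : ℝ) := by
    ext j
    simp [Finset.sum_apply, Pi.single_apply]
  change fderiv ℝ ψ x y = _
  conv_lhs => rw [hy]
  simp only [map_sum, map_smul, _root_.sum_apply, _root_.smul_apply, smul_eq_mul]
  refine Finset.sum_congr rfl fun i _ => ?_
  rw [Complex.real_smul]
  rfl

/-- Multinomial theorem for the commuting operators `y_i ∂_i`. -/
lemma lineDeriv_pow (n : ℕ) (y : Euc n) (j : ℕ) :
    lineDerivOpCLM ℂ (SchwartzMap (Euc n) ℂ) y ^ j =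
      ∑ α ∈ Finset.Nat.antidiagonalTuple n j,
        ((j.factorial : ℂ) * multiPow n y α / (multiFact n α : ℂ)) • mdOp n α := by
  rw [lineDeriv_eq_sum, Finset.sum_pow_eq_sum_piAntidiag_of_commute Finset.univ _
    (fun i _ k _ _ => ((pdOp_commute n i k).smul_left _).smul_right _),
    Finset.piAntidiag_univ_fin_eq_antidiagonalTuple]
  refine Finset.sum_congr rfl fun α hα => ?_
  have hsum : ∑ i, α i = j := Finset.Nat.mem_antidiagonalTuple.1 hα
  have hfac : (multiFact n α : ℂ) ≠ 0 := by
    unfold multiFact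
    exact_mod_cast (Finset.prod_pos fun i _ => Nat.factorial_pos _).ne'
  have hmul : (multiFact n α : ℂ) * (Nat.multinomial Finset.univ α : ℂ) = j.factorial := by
    have := Nat.multinomial_spec Finset.univ α
    rw [hsum] at this
    exact_mod_cast this
  have hprod : ∀ hc, Finset.noncommProd Finset.univ
      (fun i => (((y i : ℝ) : ℂ) • pdOp n i) ^ α i) hc = multiPow n y α • mdOp n α := by
    intro hc
    have h1 : Finset.noncommProd Finset.univ
      (fun i => (((y i : ℝ) : ℂ) • pdOp n i) ^ α i) hc =
      ((List.finRange n).map (fun i => (((y i : ℝ) : ℂ) • pdOp n i) ^ α i)).prod := by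
      exact Multiset.noncommProd_coe _ _
    have h2 : multiPow n y α = ((List.finRange n).map (fun i => ((y i : ℝ) : ℂ) ^ α i)).prod := by
      unfold multiPow
      rw [← List.ofFn_eq_map, List.prod_ofFn]
    rw [h1, h2, mdOp]
    induction List.finRange n with
    | nil => simp
    | cons i L ih =>
      simp only [List.map_cons, List.prod_cons]
      rw [ih, smul_pow, smul_mul_smul_comm]
  rw [hprod, ← nsmul_eq_mul, ← Nat.cast_smul_eq_nsmul ℂ, smul_smul]
  congr 1
  rw [← hmul]
  field_simp

/-- The restriction of `ψ` to a line through `0` is differentiated by the operator `∑ y_i ∂_i`. -/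
lemma iteratedDeriv_ray (n : ℕ) (y : Euc n) (j : ℕ) (ψ : SchwartzMap (Euc n) ℂ) :
    iteratedDeriv j (fun t : ℝ => ψ (t • y)) =
      fun t : ℝ => (lineDerivOpCLM ℂ (SchwartzMap (Euc n) ℂ) y ^ j) ψ (t • y) := by
  induction j with
  | zero => simp
  | succ j ih =>
    rw [iteratedDeriv_succ, ih, pow_succ']
    funext t
    have h1 : HasDerivAt (fun t : ℝ => t • y) y t := by
      simpa using (hasDerivAt_id t).smul_const y
    exact ((((lineDerivOpCLM ℂ (SchwartzMap (Euc n) ℂ) y ^ j) ψ).hasFDerivAt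
      (t • y)).comp_hasDerivAt t h1).deriv

lemma lineDeriv_pow_norm_le (n : ℕ) (y : Euc n) (j : ℕ) (ψ : SchwartzMap (Euc n) ℂ)
    (x : Euc n) :
    ‖(lineDerivOpCLM ℂ (SchwartzMap (Euc n) ℂ) y ^ j) ψ x‖ ≤
      ‖iteratedFDeriv ℝ j ψ x‖ * ‖y‖ ^ j := by
  have h1 : (lineDerivOpCLM ℂ (SchwartzMap (Euc n) ℂ) y ^ j) ψ = ∂^{fun _ : Fin j => y} ψ := by
    rw [iteratedLineDerivOp_const_eq_iter_lineDerivOp]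
    induction j with
    | zero => rfl
    | succ j ih =>
      rw [pow_succ', Function.iterate_succ_apply', ← ih]
      rfl
  rw [h1, SchwartzMap.iteratedLineDerivOp_eq_iteratedFDeriv]
  refine (ContinuousMultilinearMap.le_opNorm _ _).trans (by simp)

/-- Multivariate Taylor estimate, from the one-variable one along the segment from `0` to `y`. -/
lemma taylor_bound (n N : ℕ) (ψ : SchwartzMap (Euc n) ℂ) (C : ℝ)
    (hC : ∀ x, ‖iteratedFDeriv ℝ N ψ x‖ ≤ C) (y : Euc n) :
    ‖ψ y - taylorPart n N (⇑ψ) y‖ ≤ C * ‖y‖ ^ N := by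
  rcases N with _ | N
  · simpa [taylorPart] using hC y
  have hg : ContDiff ℝ (N + 1) (fun t : ℝ => ψ (t • y)) :=
    (ψ.smooth (N + 1)).comp (contDiff_id.smul contDiff_const)
  have hder : ∀ j ≤ N + 1, ∀ t ∈ Set.Icc (0 : ℝ) 1,
      iteratedDerivWithin j (fun t : ℝ => ψ (t • y)) (Set.Icc (0 : ℝ) 1) t
        = (lineDerivOpCLM ℂ (SchwartzMap (Euc n) ℂ) y ^ j) ψ (t • y) := by
    intro j hj t ht
    rw [iteratedDerivWithin_eq_iteratedDeriv (uniqueDiffOn_Icc zero_lt_one)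
      (hg.contDiffAt.of_le (by exact_mod_cast hj)) ht, iteratedDeriv_ray]
  have hCy : 0 ≤ C * ‖y‖ ^ (N + 1) :=
    mul_nonneg ((norm_nonneg _).trans (hC 0)) (by positivity)
  have hb := taylor_mean_remainder_bound (f := fun t : ℝ => ψ (t • y)) (a := 0) (b := 1)
    (C := C * ‖y‖ ^ (N + 1)) (x := 1) (n := N) zero_le_one hg.contDiffOn (by simp) (by
      intro t ht
      rw [hder (N + 1) le_rfl t ht]
      refine (lineDeriv_pow_norm_le _ _ _ _ _).trans ?_
      gcongr
      exact hC _)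
  have heq : taylorWithinEval (fun t : ℝ => ψ (t • y)) N (Set.Icc 0 1) 0 1
      = taylorPart n (N + 1) (⇑ψ) y := by
    rw [taylor_within_apply, taylorPart]
    refine Finset.sum_congr rfl fun j hj => ?_
    rw [hder j (Finset.mem_range.1 hj).le 0 (by simp), lineDeriv_pow]
    simp only [_root_.sum_apply, _root_.smul_apply, smul_eq_mul, zero_smul, sub_zero, one_pow,
      mul_one, Complex.real_smul, Finset.mul_sum]
    refine Finset.sum_congr rfl fun α _ => ?_
    have : (j.factorial : ℂ) ≠ 0 := by exact_mod_cast j.factorial_ne_zero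
    rw [mdOp_coe]
    push_cast
    field_simp
  rw [heq] at hb
  simp only [one_smul, sub_zero, one_pow, mul_one] at hb
  refine hb.trans (div_le_self hCy ?_)
  exact_mod_cast Nat.factorial_pos N

/-! ### The regularised pairing, radial primitives and scaling -/

/-- The pure log-homogeneous function `|y|^m (log |y|)^l f(y)`. -/
def logFun (n : ℕ) (m : ℂ) (f : Euc n → ℂ) (l : ℕ) (y : Euc n) : ℂ :=
  (‖y‖ : ℂ) ^ m * (Real.log ‖y‖ : ℂ) ^ l * f y

/-- `ψ` with its Taylor polynomial of degree `< N` subtracted inside the ball of radius `R`. -/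
def taylorRem (n N : ℕ) (R : ℝ) (ψ : Euc n → ℂ) (y : Euc n) : ℂ :=
  ψ y - if ‖y‖ < R then taylorPart n N ψ y else 0

/-- The primitive of `r ^ (s - 1) (log r) ^ l` on `(0, ∞)` obtained by repeated integration by
parts, i.e. the one without constant term. -/
def radPrim (s : ℂ) : ℕ → ℝ → ℂ
  | 0, r => (r : ℂ) ^ s / s
  | l + 1, r => ((r : ℂ) ^ s * (Real.log r : ℂ) ^ (l + 1) - (l + 1) * radPrim s l r) / s

/-- The regularised pairing with `|y|^m (log |y|)^l f(y)`, with cut-off radius `R`: the integral of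
the Taylor remainder plus the finite part of the integral of the Taylor polynomial. -/
def regPair (n N : ℕ) (m : ℂ) (f : Euc n → ℂ) (R : ℝ) (l : ℕ) (ψ : Euc n → ℂ) : ℂ :=
  (∫ y, logFun n m f l y * taylorRem n N R ψ y) +
    ∑ j ∈ Finset.range N, ∑ α ∈ Finset.Nat.antidiagonalTuple n j,
      multiDeriv n α ψ 0 / (multiFact n α : ℂ) * radPrim (m + n + j) l R *
        sphereIntegral n (fun θ => f θ * multiPow n θ α)

lemma radPrim_one (s : ℂ) (l : ℕ) :
    radPrim s l 1 = (-1) ^ l * (l.factorial : ℂ) / s ^ (l + 1) := by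
  induction l with
  | zero => simp [radPrim]
  | succ l ih =>
    rw [radPrim, ih]
    by_cases hs : s = 0
    · simp [hs]
    simp only [Complex.ofReal_one, Complex.one_cpow, Real.log_one, Complex.ofReal_zero,
      Nat.factorial_succ]
    push_cast
    field_simp
    ring

lemma radPrim_hasDerivAt (s : ℂ) (hs : s ≠ 0) (l : ℕ) (r : ℝ) (hr : 0 < r) :
    HasDerivAt (radPrim s l) ((r : ℂ) ^ (s - 1) * (Real.log r : ℂ) ^ l) r := by
  have h1 : HasDerivAt (fun r : ℝ => (r : ℂ) ^ s) (s * (r : ℂ) ^ (s - 1)) r := by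
    have := (hasDerivAt_id (r : ℂ)).cpow_const (c := s) (Or.inl (by simpa using hr))
    simpa using this.comp_ofReal
  have h2 : HasDerivAt (fun r : ℝ => (Real.log r : ℂ)) ((r : ℂ)⁻¹) r := by
    simpa using (Real.hasDerivAt_log hr.ne').ofReal_comp
  have hr' : (r : ℂ) ≠ 0 := by exact_mod_cast hr.ne'
  induction l with
  | zero =>
    have := h1.div_const s
    convert! this using 1
    field_simp
  | succ l ih =>
    have := ((h1.mul (h2.pow (l + 1))).sub (ih.const_mul ((l : ℂ) + 1))).div_const s
    convert! this using 1
    have h3 : (r : ℂ) ^ s = (r : ℂ) ^ (s - 1) * r := by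
      rw [Complex.cpow_sub _ _ hr', Complex.cpow_one]
      field_simp
    rw [h3, Pi.pow_apply]
    push_cast
    field_simp
    ring

/-- Scaling of the radial primitives; the induction uses the recursion
`s P_l = r ^ s (log r) ^ l - l P_{l-1}` and `C(l,i) (l-i) = l C(l-1,i)`. -/
lemma radPrim_scale (s : ℂ) (hs : s ≠ 0) (l : ℕ) (r t : ℝ) (hr : 0 < r) (ht : 0 < t) :
    ∑ i ∈ Finset.range (l + 1),
      (l.choose i : ℂ) * (Real.log t : ℂ) ^ i * radPrim s (l - i) r
      = ((t : ℂ) ^ s)⁻¹ * radPrim s l (t * r) := by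
  have ht' : (t : ℂ) ≠ 0 := by exact_mod_cast ht.ne'
  have hmul : ((t * r : ℝ) : ℂ) ^ s = (t : ℂ) ^ s * (r : ℂ) ^ s := by
    push_cast
    exact Complex.mul_cpow_ofReal_nonneg ht.le hr.le s
  have hts : (t : ℂ) ^ s ≠ 0 := by simp [Complex.cpow_eq_zero_iff, ht']
  induction l with
  | zero =>
    simp only [zero_add, Finset.sum_range_one, Nat.choose_self, Nat.cast_one, pow_zero, one_mul,
      Nat.sub_self, radPrim, hmul]
    field_simp
  | succ l ih =>
    have hrec : ∀ k ρ, s * radPrim s (k + 1) ρ =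
        (ρ : ℂ) ^ s * (Real.log ρ : ℂ) ^ (k + 1) - (k + 1) * radPrim s k ρ := by
      intro k ρ
      rw [radPrim]
      field_simp
    have hlog : (Real.log (t * r) : ℂ) = Real.log t + Real.log r := by
      rw [Real.log_mul ht.ne' hr.ne']
      push_cast
      rfl
    apply mul_left_cancel₀ hs
    rw [mul_left_comm s, hrec, hmul, hlog, add_pow, mul_sub,
      mul_left_comm (((t : ℂ) ^ s)⁻¹) ((l : ℂ) + 1), ← ih, Finset.mul_sum]
    rw [Finset.sum_range_succ, Finset.sum_range_succ _ (l + 1)]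
    have hlast : s * (((l + 1).choose (l + 1) : ℂ) * (Real.log t : ℂ) ^ (l + 1) *
        radPrim s (l + 1 - (l + 1)) r) = (Real.log t : ℂ) ^ (l + 1) * (r : ℂ) ^ s := by
      simp [radPrim]
      field_simp
    have hterm : ∀ i ∈ Finset.range (l + 1), s * (((l + 1).choose i : ℂ) *
        (Real.log t : ℂ) ^ i * radPrim s (l + 1 - i) r) =
        (r : ℂ) ^ s * ((Real.log t : ℂ) ^ i * (Real.log r : ℂ) ^ (l + 1 - i) *
          ((l + 1).choose i : ℂ)) -
        ((l : ℂ) + 1) * ((l.choose i : ℂ) * (Real.log t : ℂ) ^ i * radPrim s (l - i) r) := by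
      intro i hi
      have hi' : i ≤ l := Nat.lt_succ_iff.1 (Finset.mem_range.1 hi)
      have e1 : l + 1 - i = (l - i) + 1 := by omega
      have hch : ((l + 1).choose i : ℂ) * (((l - i : ℕ) : ℂ) + 1) =
          ((l : ℂ) + 1) * (l.choose i : ℂ) := by
        have h := Nat.choose_mul_succ_eq l i
        rw [e1] at h
        have h' := congrArg (Nat.cast (R := ℂ)) h
        push_cast at h'
        linear_combination -h'
      have := hrec (l - i) r
      rw [e1]
      linear_combination ((l + 1).choose i : ℂ) * (Real.log t : ℂ) ^ i * this -
        (Real.log t : ℂ) ^ i * radPrim s (l - i) r * hch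
    rw [hlast, Finset.sum_congr rfl hterm, Finset.sum_sub_distrib, ← Finset.mul_sum,
      ← Finset.mul_sum]
    have : ((t : ℂ) ^ s)⁻¹ * ((t : ℂ) ^ s * (r : ℂ) ^ s) = (r : ℂ) ^ s := by field_simp
    rw [← mul_assoc (((t : ℂ) ^ s)⁻¹), this]
    simp
    ring

lemma logFun_smul (n : ℕ) (m : ℂ) (f : Euc n → ℂ)
    (hf : ∀ t : ℝ, 0 < t → ∀ y : Euc n, y ≠ 0 → f (t • y) = f y) (l : ℕ) (t : ℝ) (ht : 0 < t)
    (y : Euc n) (hy : y ≠ 0) :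
    logFun n m f l (t • y) = (t : ℂ) ^ m * ∑ i ∈ Finset.range (l + 1),
      (l.choose i : ℂ) * (Real.log t : ℂ) ^ i * logFun n m f (l - i) y := by
  have hy' : 0 < ‖y‖ := norm_pos_iff.2 hy
  unfold logFun
  rw [hf t ht y hy, norm_smul, Real.norm_of_nonneg ht.le, Real.log_mul ht.ne' hy'.ne']
  push_cast
  rw [Complex.mul_cpow_ofReal_nonneg ht.le hy'.le, add_pow, Finset.mul_sum, Finset.mul_sum,
    Finset.sum_mul]
  refine Finset.sum_congr rfl fun i _ => ?_
  ring

lemma multiPow_smul (n : ℕ) (t : ℝ) (y : Euc n) (j : ℕ) (α : Fin n → ℕ)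
    (hα : α ∈ Finset.Nat.antidiagonalTuple n j) :
    multiPow n (t • y) α = (t : ℂ) ^ j * multiPow n y α := by
  rw [← Finset.Nat.mem_antidiagonalTuple.1 hα]
  simp [multiPow, mul_pow, Finset.prod_mul_distrib, Finset.prod_pow_eq_pow_sum]

lemma pderiv1_iter_scale (n : ℕ) (i : Fin n) (a : ℕ) (c : ℂ) (t : ℝ) (g : Euc n → ℂ) :
    (pderiv1 n i)^[a] (fun y => c * g (t • y)) =
      fun y => c * (t : ℂ) ^ a * (pderiv1 n i)^[a] g (t • y) := by
  induction a with
  | zero => simp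
  | succ a ih =>
    rw [Function.iterate_succ_apply', Function.iterate_succ_apply', ih]
    funext y
    have h1 : (fun y => c * (t : ℂ) ^ a * (pderiv1 n i)^[a] g (t • y)) =
      (c * (t : ℂ) ^ a) • (fun y => (pderiv1 n i)^[a] g (t • y)) := rfl
    unfold pderiv1 at h1 ⊢
    rw [h1, fderiv_const_smul_field]
    have h2 := fderiv_comp_smul (𝕜 := ℝ) (f := (pderiv1 n i)^[a] g) (x := y) t
    unfold pderiv1 at h2
    simp only [Pi.smul_apply, _root_.smul_apply, h2, smul_eq_mul, Complex.real_smul]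
    ring

lemma multiDeriv_scale (n : ℕ) (j : ℕ) (α : Fin n → ℕ)
    (hα : α ∈ Finset.Nat.antidiagonalTuple n j) (c : ℂ) (t : ℝ) (g : Euc n → ℂ) :
    multiDeriv n α (fun y => c * g (t • y)) =
      fun y => c * (t : ℂ) ^ j * multiDeriv n α g (t • y) := by
  have key : ∀ L : List (Fin n),
      (L.foldr (fun i F => (pderiv1 n i)^[α i] ∘ F) id) (fun y => c * g (t • y)) =
      fun y => c * (t : ℂ) ^ (L.map α).sum *
        (L.foldr (fun i F => (pderiv1 n i)^[α i] ∘ F) id) g (t • y) := by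
    intro L
    induction L with
    | nil => simp
    | cons i L ih =>
      simp only [List.foldr_cons, Function.comp_apply, List.map_cons, List.sum_cons]
      rw [ih, pderiv1_iter_scale]
      funext y
      ring
  have hs : ((List.finRange n).map α).sum = j := by
    rw [← Finset.Nat.mem_antidiagonalTuple.1 hα, ← List.ofFn_eq_map, List.sum_ofFn]
  unfold multiDeriv
  rw [key, hs]

lemma taylorPart_scale (n N : ℕ) (c : ℂ) (t : ℝ) (g : Euc n → ℂ) (y : Euc n) :
    taylorPart n N (fun y => c * g (t • y)) y = c * taylorPart n N g (t • y) := by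
  unfold taylorPart
  simp only [Finset.mul_sum]
  refine Finset.sum_congr rfl fun j _ => Finset.sum_congr rfl fun α hα => ?_
  simp only [multiDeriv_scale n j α hα, multiPow_smul n t y j α hα, smul_zero]
  ring

lemma taylorRem_scale (n N : ℕ) (c : ℂ) (t : ℝ) (ht : 0 < t) (g : Euc n → ℂ) (y : Euc n) :
    taylorRem n N 1 (fun y => c * g (t • y)) y = c * taylorRem n N t g (t • y) := by
  unfold taylorRem
  rw [taylorPart_scale, norm_smul, Real.norm_of_nonneg ht.le]
  have : t * ‖y‖ < t ↔ ‖y‖ < 1 := by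
    constructor <;> intro h <;> nlinarith
  simp only [this]
  split_ifs <;> ring

/-- Derivatives at `0` of a function that vanishes near `0`. -/
lemma multiDeriv_eq_zero (n : ℕ) (α : Fin n → ℕ) (g : Euc n → ℂ)
    (hg : g =ᶠ[nhds 0] 0) : multiDeriv n α g 0 = 0 := by
  have h1 : ∀ i (h : Euc n → ℂ), h =ᶠ[nhds 0] 0 → pderiv1 n i h =ᶠ[nhds 0] 0 := by
    intro i h hh
    filter_upwards [hh.fderiv (𝕜 := ℝ)] with x hx
    unfold pderiv1
    rw [hx]
    simp
  have h2 : ∀ i a (h : Euc n → ℂ), h =ᶠ[nhds 0] 0 → (pderiv1 n i)^[a] h =ᶠ[nhds 0] 0 := by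
    intro i a h hh
    induction a with
    | zero => exact hh
    | succ a ih =>
      rw [Function.iterate_succ_apply']
      exact h1 i _ ih
  have h3 : multiDeriv n α g =ᶠ[nhds 0] 0 := by
    unfold multiDeriv
    induction List.finRange n with
    | nil => exact hg
    | cons i L ih => exact h2 i _ _ ih
  exact h3.eq_of_nhds

/-! ### Domination and integration in polar coordinates -/

/-- A continuous `0`-homogeneous function is bounded by its supremum over the unit sphere. -/
lemma homog_bounded (n : ℕ) (f : Euc n → ℂ) (hc : ContinuousOn f {y : Euc n | y ≠ 0})
    (hf : ∀ t : ℝ, 0 < t → ∀ y : Euc n, y ≠ 0 → f (t • y) = f y) :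
    ∃ C : ℝ, 0 ≤ C ∧ ∀ y : Euc n, y ≠ 0 → ‖f y‖ ≤ C := by
  have hsub : Metric.sphere (0 : Euc n) 1 ⊆ {y : Euc n | y ≠ 0} := by
    rintro y hy rfl
    simp at hy
  obtain ⟨C, hC⟩ := (isCompact_sphere (0 : Euc n) 1).exists_bound_of_continuousOn (hc.mono hsub)
  refine ⟨max C 0, le_max_right _ _, fun y hy => ?_⟩
  have hy' : 0 < ‖y‖ := norm_pos_iff.2 hy
  rw [← hf ‖y‖⁻¹ (by positivity) y hy]
  refine (hC _ ?_).trans (le_max_left _ _)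
  simp [norm_smul, hy'.ne']

lemma abs_log_pow_le (l : ℕ) (ε : ℝ) (hε : 0 < ε) :
    ∃ C : ℝ, 0 ≤ C ∧ ∀ r : ℝ, 0 < r → r < 1 → |Real.log r| ^ l ≤ C * r ^ (-ε) := by
  rcases Nat.eq_zero_or_pos l with rfl | hl
  · refine ⟨1, zero_le_one, fun r hr hr1 => ?_⟩
    simpa using Real.one_le_rpow_of_pos_of_le_one_of_nonpos hr hr1.le (neg_nonpos.2 hε.le)
  have hl' : (0 : ℝ) < l := by exact_mod_cast hl
  refine ⟨(1 / (ε / l)) ^ l, by positivity, fun r hr hr1 => ?_⟩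
  have h := Real.abs_log_mul_self_rpow_lt r (ε / l) hr hr1.le (by positivity)
  rw [abs_mul, abs_of_pos (Real.rpow_pos_of_pos hr _), ← lt_div_iff₀ (Real.rpow_pos_of_pos hr _),
    div_eq_mul_inv _ (r ^ (ε / l)), ← Real.rpow_neg hr.le] at h
  refine (pow_le_pow_left₀ (abs_nonneg _) h.le l).trans (le_of_eq ?_)
  rw [mul_pow, ← Real.rpow_natCast (r ^ (-(ε / l))), ← Real.rpow_mul hr.le]
  congr 2
  field_simp

lemma logFun_continuousOn (n : ℕ) (m : ℂ) (f : Euc n → ℂ)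
    (hc : ContinuousOn f {y : Euc n | y ≠ 0}) (l : ℕ) :
    ContinuousOn (logFun n m f l) {y : Euc n | y ≠ 0} := by
  unfold logFun
  have h0 : ContinuousOn (fun y : Euc n => (‖y‖ : ℂ)) {y : Euc n | y ≠ 0} := by fun_prop
  refine ContinuousOn.mul (ContinuousOn.mul ?_ ?_) hc
  · intro y hy
    refine ContinuousWithinAt.cpow (h0 y hy) continuousWithinAt_const (Or.inl ?_)
    simpa using hy
  · refine ContinuousOn.pow ?_ l
    refine Complex.continuous_ofReal.comp_continuousOn (ContinuousOn.log (by fun_prop) ?_)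
    intro y hy
    simpa using hy

lemma ae_ne_zero (n : ℕ) (hn : 1 ≤ n) : ∀ᵐ y : Euc n, y ≠ 0 := by
  have : Nonempty (Fin n) := ⟨⟨0, hn⟩⟩
  have : Nontrivial (Euc n) := inferInstance
  exact Measure.ae_ne volume 0

lemma logFun_aesm (n : ℕ) (hn : 1 ≤ n) (m : ℂ) (f : Euc n → ℂ)
    (hc : ContinuousOn f {y : Euc n | y ≠ 0}) (l : ℕ) :
    AEStronglyMeasurable (logFun n m f l) volume := by
  have hm : MeasurableSet {y : Euc n | y ≠ 0} := (measurableSet_singleton (0 : Euc n)).compl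
  have h := (logFun_continuousOn n m f hc l).aestronglyMeasurable (μ := volume) hm
  rwa [Measure.restrict_eq_self_of_ae_mem (s := {y : Euc n | y ≠ 0}) (ae_ne_zero n hn)] at h

lemma multiPow_continuous (n : ℕ) (α : Fin n → ℕ) : Continuous fun y => multiPow n y α := by
  unfold multiPow
  fun_prop

lemma taylorPart_continuous (n N : ℕ) (g : Euc n → ℂ) : Continuous (taylorPart n N g) := by
  unfold taylorPart
  have := multiPow_continuous n
  fun_prop

lemma taylorRem_measurable (n N : ℕ) (R : ℝ) (ψ : SchwartzMap (Euc n) ℂ) :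
    Measurable (taylorRem n N R ψ) := by
  unfold taylorRem
  refine ψ.continuous.measurable.sub (Measurable.ite ?_ ?_ measurable_const)
  · exact measurableSet_lt measurable_norm measurable_const
  · exact (taylorPart_continuous n N _).measurable

lemma norm_logFun_le (n : ℕ) (m : ℂ) (f : Euc n → ℂ) (C : ℝ)
    (hC : ∀ y : Euc n, y ≠ 0 → ‖f y‖ ≤ C) (l : ℕ) (y : Euc n) (hy : y ≠ 0) :
    ‖logFun n m f l y‖ ≤ ‖y‖ ^ m.re * |Real.log ‖y‖| ^ l * C := by
  unfold logFun
  rw [norm_mul, norm_mul, norm_pow, Complex.norm_real, Real.norm_eq_abs,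
    Complex.norm_cpow_eq_rpow_re_of_pos (norm_pos_iff.2 hy)]
  gcongr
  exact hC y hy

/-- The integrand of the regularised pairing is dominated by a fixed integrable function times a
Schwartz seminorm: near `0` it is `O(|y| ^ (Re m + N - ε))` with `Re m + N - ε > -n` by Taylor's
estimate, and at infinity the Schwartz decay beats the polynomial growth. -/
lemma integrand_bound (n : ℕ) (hn : 1 ≤ n) (m : ℂ) (f : Euc n → ℂ)
    (hc : ContinuousOn f {y : Euc n | y ≠ 0})
    (hf : ∀ t : ℝ, 0 < t → ∀ y : Euc n, y ≠ 0 → f (t • y) = f y) (l N : ℕ)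
    (hN : -(n : ℝ) - m.re < (N : ℝ)) :
    ∃ (G : Euc n → ℝ) (s : Finset (ℕ × ℕ)), Integrable G ∧
      ∀ (ψ : SchwartzMap (Euc n) ℂ) (y : Euc n), y ≠ 0 →
        ‖logFun n m f l y * taylorRem n N 1 ψ y‖ ≤
          G y * s.sup (schwartzSeminormFamily ℂ (Euc n) ℂ) ψ := by
  obtain ⟨Cf, hCf0, hCf⟩ := homog_bounded n f hc hf
  obtain ⟨Cl, hCl0, hCl⟩ := abs_log_pow_le l ((n + m.re + N) / 2) (by linarith)
  -- half of the margin `n + Re m + N > 0` is spent on absorbing the logarithms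
  set ε : ℝ := (n + m.re + N) / 2 with hε
  have hεpos : 0 < ε := by linarith
  -- `⌈|Re m|⌉ + l` powers of `1 + |y|` beat `|w_l|`, and `n + 1` more give integrability
  set M : ℕ := ⌈|m.re|⌉₊ + l + (n + 1) with hM
  set β : ℝ := m.re + N - ε with hβ
  have hfin : Module.finrank ℝ (Euc n) = n := by simp
  let G1 : Euc n → ℝ := (Metric.ball (0 : Euc n) 1).indicator
    (fun y => Cf * Cl * 2 ^ M * ‖y‖ ^ β)
  let G2 : Euc n → ℝ := fun y => Cf * 2 ^ M * (1 + ‖y‖) ^ (-((n : ℝ) + 1))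
  have hG1 : Integrable G1 := by
    rw [integrable_indicator_iff measurableSet_ball]
    refine integrableOn_ball_of_norm_le_rpow (α := -β) (C := Cf * Cl * 2 ^ M)
      (by rw [hfin]; exact hn) (by rw [hfin, hβ]; linarith) ?_ ?_
    · refine Eventually.of_forall fun y => ?_
      rw [Real.norm_of_nonneg (by positivity), neg_neg]
    · exact ((measurable_norm.pow_const β).const_mul _).aestronglyMeasurable
  have hG2 : Integrable G2 :=
    (integrable_one_add_norm (by rw [hfin]; linarith)).const_mul _
  refine ⟨fun y => G1 y + G2 y, Finset.Iic (M, N), hG1.add hG2, fun ψ y hy => ?_⟩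
  have hy' : 0 < ‖y‖ := norm_pos_iff.2 hy
  set p : ℝ := (Finset.Iic (M, N)).sup (schwartzSeminormFamily ℂ (Euc n) ℂ) ψ with hp
  have hp0 : 0 ≤ p := apply_nonneg _ _
  have hsem : ∀ k ≤ M, ∀ j ≤ N, ∀ x,
      (1 + ‖x‖) ^ k * ‖iteratedFDeriv ℝ j ψ x‖ ≤ 2 ^ M * p := fun k hk j hj x =>
    SchwartzMap.one_add_le_sup_seminorm_apply (𝕜 := ℂ) (m := (M, N)) hk hj ψ x
  have hw := norm_logFun_le n m f Cf hCf l y hy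
  rw [norm_mul]
  by_cases h1 : ‖y‖ < 1
  · have hrem : ‖taylorRem n N 1 ψ y‖ ≤ 2 ^ M * p * ‖y‖ ^ N := by
      have := taylor_bound n N ψ (2 ^ M * p) (fun x => by simpa using hsem 0 (by simp) N le_rfl x) y
      simpa [taylorRem, h1] using this
    have hG1y : G1 y = Cf * Cl * 2 ^ M * ‖y‖ ^ β := by
      simp [G1, h1]
    have hG2y : 0 ≤ G2 y := by positivity
    have hpow : ‖y‖ ^ m.re * ‖y‖ ^ (-ε) * ‖y‖ ^ N = ‖y‖ ^ β := by
      rw [← Real.rpow_natCast ‖y‖ N, ← Real.rpow_add hy', ← Real.rpow_add hy']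
      congr 1
      ring
    calc ‖logFun n m f l y‖ * ‖taylorRem n N 1 ψ y‖
        ≤ (‖y‖ ^ m.re * (Cl * ‖y‖ ^ (-ε)) * Cf) * (2 ^ M * p * ‖y‖ ^ N) := by
          gcongr
          refine hw.trans ?_
          gcongr
          exact hCl _ hy' h1
      _ = G1 y * p := by
          rw [hG1y, ← hpow]
          ring
      _ ≤ (G1 y + G2 y) * p := by
          gcongr
          linarith
  · have h1' : 1 ≤ ‖y‖ := not_lt.1 h1
    have hrem : taylorRem n N 1 ψ y = ψ y := by simp [taylorRem, h1]
    have hG1y : G1 y = 0 := by simp [G1, h1]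
    have hψ : (1 + ‖y‖) ^ M * ‖ψ y‖ ≤ 2 ^ M * p := by
      simpa using hsem M le_rfl 0 (Nat.zero_le _) y
    have hA : ‖y‖ ^ m.re ≤ (1 + ‖y‖) ^ ⌈|m.re|⌉₊ := by
      rw [← Real.rpow_natCast]
      calc ‖y‖ ^ m.re ≤ ‖y‖ ^ (⌈|m.re|⌉₊ : ℝ) :=
            Real.rpow_le_rpow_of_exponent_le h1' ((le_abs_self _).trans (Nat.le_ceil _))
        _ ≤ _ := Real.rpow_le_rpow hy'.le (by linarith) (by positivity)
    have hB : |Real.log ‖y‖| ≤ 1 + ‖y‖ := by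
      rw [abs_of_nonneg (Real.log_nonneg h1')]
      linarith [Real.log_le_sub_one_of_pos hy']
    have hD : (1 + ‖y‖) ^ (-((n : ℝ) + 1)) * (1 + ‖y‖) ^ (n + 1) = 1 := by
      rw [← Real.rpow_natCast (1 + ‖y‖) (n + 1), ← Real.rpow_add (by positivity)]
      simp
    calc ‖logFun n m f l y‖ * ‖taylorRem n N 1 ψ y‖
        ≤ ((1 + ‖y‖) ^ ⌈|m.re|⌉₊ * (1 + ‖y‖) ^ l * Cf) * ‖ψ y‖ := by
          rw [hrem]
          gcongr
          refine hw.trans ?_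
          gcongr
      _ = Cf * (1 + ‖y‖) ^ (-((n : ℝ) + 1)) * ((1 + ‖y‖) ^ M * ‖ψ y‖) := by
          rw [hM, pow_add _ (_ + l), pow_add]
          linear_combination (-((1 + ‖y‖) ^ ⌈|m.re|⌉₊ * (1 + ‖y‖) ^ l * Cf * ‖ψ y‖)) * hD
      _ ≤ Cf * (1 + ‖y‖) ^ (-((n : ℝ) + 1)) * (2 ^ M * p) := by gcongr
      _ = (G1 y + G2 y) * p := by
          rw [hG1y]
          ring

lemma integrand_integrable_one (n : ℕ) (hn : 1 ≤ n) (m : ℂ) (f : Euc n → ℂ)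
    (hc : ContinuousOn f {y : Euc n | y ≠ 0})
    (hf : ∀ t : ℝ, 0 < t → ∀ y : Euc n, y ≠ 0 → f (t • y) = f y) (l N : ℕ)
    (hN : -(n : ℝ) - m.re < (N : ℝ)) (ψ : SchwartzMap (Euc n) ℂ) :
    Integrable (fun y => logFun n m f l y * taylorRem n N 1 ψ y) := by
  obtain ⟨G, s, hG, hb⟩ := integrand_bound n hn m f hc hf l N hN
  refine (hG.mul_const (s.sup (schwartzSeminormFamily ℂ (Euc n) ℂ) ψ)).mono'
    ((logFun_aesm n hn m f hc l).mul
    (taylorRem_measurable n N 1 ψ).aestronglyMeasurable) ?_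
  filter_upwards [ae_ne_zero n hn] with y hy using hb ψ y hy

/-- Integration in polar coordinates of a product of a radial and an angular function. -/
lemma integral_polar (n : ℕ) (hn : 1 ≤ n) (F : Euc n → ℂ) (g : ℝ → ℂ) (H : Euc n → ℂ)
    (hF : ∀ y : Euc n, y ≠ 0 → F y = H (‖y‖⁻¹ • y) * g ‖y‖) :
    ∫ y, F y = sphereIntegral n H * ∫ r in Set.Ioi (0 : ℝ), (r : ℂ) ^ (n - 1) * g r := by
  have : Nonempty (Fin n) := ⟨⟨0, hn⟩⟩
  have hfin : Module.finrank ℝ (Euc n) = n := by simp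
  calc ∫ y, F y
      = ∫ x : ({(0 : Euc n)}ᶜ : Set (Euc n)), F x.1 ∂((volume : Measure (Euc n)).comap (↑)) := by
        rw [integral_subtype_comap (measurableSet_singleton _).compl fun x => F x,
          restrict_compl_singleton]
    _ = ∫ x : ({(0 : Euc n)}ᶜ : Set (Euc n)),
          (fun z : Metric.sphere (0 : Euc n) 1 × Set.Ioi (0 : ℝ) => H z.1 * g z.2)
            (homeomorphUnitSphereProd (Euc n) x) ∂((volume : Measure (Euc n)).comap (↑)) := by
        refine integral_congr_ae (Eventually.of_forall fun x => ?_)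
        simpa using hF x.1 x.2
    _ = ∫ z : Metric.sphere (0 : Euc n) 1 × Set.Ioi (0 : ℝ), H z.1 * g z.2
          ∂((volume : Measure (Euc n)).toSphere.prod (.volumeIoiPow (n - 1))) := by
        have := (volume : Measure (Euc n)).measurePreserving_homeomorphUnitSphereProd.integral_comp
          (Homeomorph.measurableEmbedding _)
          (fun z : Metric.sphere (0 : Euc n) 1 × Set.Ioi (0 : ℝ) => H z.1 * g z.2)
        rw [hfin] at this
        exact this
    _ = sphereIntegral n H * ∫ r : Set.Ioi (0 : ℝ), g r ∂(Measure.volumeIoiPow (n - 1)) :=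
        integral_prod_mul (fun θ : Metric.sphere (0 : Euc n) 1 => H θ)
          (fun r : Set.Ioi (0 : ℝ) => g r)
    _ = _ := by
        congr 1
        simp only [Measure.volumeIoiPow, ENNReal.ofReal]
        rw [integral_withDensity_eq_integral_smul,
          integral_subtype_comap measurableSet_Ioi fun a => Real.toNNReal (a ^ (n - 1)) • g a,
          setIntegral_congr_fun measurableSet_Ioi fun x hx => ?_]
        · rw [NNReal.smul_def, Real.coe_toNNReal _ (pow_nonneg hx.out.le _), Complex.real_smul]
          push_cast
          rfl
        · exact (measurable_subtype_coe.pow_const _).real_toNNReal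

/-- The integral of `|y|^m (log |y|)^l f(y) y^α` over the annulus `a ≤ |y| < b`. -/
lemma annulus_integral (n : ℕ) (hn : 1 ≤ n) (m : ℂ) (f : Euc n → ℂ)
    (hf : ∀ t : ℝ, 0 < t → ∀ y : Euc n, y ≠ 0 → f (t • y) = f y) (l j : ℕ)
    (hs : m + n + j ≠ 0) (α : Fin n → ℕ) (hα : α ∈ Finset.Nat.antidiagonalTuple n j)
    (a b : ℝ) (ha : 0 < a) (hab : a ≤ b) :
    ∫ y, (if a ≤ ‖y‖ ∧ ‖y‖ < b then logFun n m f l y * multiPow n y α else 0) =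
      (radPrim (m + n + j) l b - radPrim (m + n + j) l a) *
        sphereIntegral n (fun θ => f θ * multiPow n θ α) := by
  set s : ℂ := m + n + j with hsdef
  rw [integral_polar n hn _ ((Set.Ico a b).indicator
    fun r => (r : ℂ) ^ m * (r : ℂ) ^ j * (Real.log r : ℂ) ^ l) (fun θ => f θ * multiPow n θ α)]
  · rw [mul_comm]
    congr 1
    have h1 : ∀ r : ℝ, (r : ℂ) ^ (n - 1) * (Set.Ico a b).indicator
        (fun r : ℝ => (r : ℂ) ^ m * (r : ℂ) ^ j * (Real.log r : ℂ) ^ l) r =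
        (Set.Ico a b).indicator (fun r : ℝ => (r : ℂ) ^ (s - 1) * (Real.log r : ℂ) ^ l) r := by
      intro r
      by_cases hr : r ∈ Set.Ico a b
      · rw [Set.indicator_of_mem hr, Set.indicator_of_mem hr]
        have hr0 : (r : ℂ) ≠ 0 := by exact_mod_cast (ha.trans_le hr.1).ne'
        have : s - 1 = ((n - 1 : ℕ) : ℂ) + m + (j : ℂ) := by
          rw [hsdef, Nat.cast_sub hn]
          push_cast
          ring
        rw [this, Complex.cpow_add _ _ hr0, Complex.cpow_add _ _ hr0, Complex.cpow_natCast,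
          Complex.cpow_natCast]
        ring
      · simp [Set.indicator_of_notMem hr]
    simp only [h1]
    rw [setIntegral_indicator measurableSet_Ico,
      Set.inter_eq_right.2 (show Set.Ico a b ⊆ Set.Ioi 0 from fun r hr => ha.trans_le hr.1),
      integral_Ico_eq_integral_Ioc,
      ← intervalIntegral.integral_of_le hab]
    have hpos : ∀ r ∈ Set.uIcc a b, 0 < r := by
      intro r hr
      rw [Set.uIcc_of_le hab] at hr
      exact ha.trans_le hr.1
    refine intervalIntegral.integral_eq_sub_of_hasDerivAt
      (fun r hr => radPrim_hasDerivAt s hs l r (hpos r hr)) ?_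
    refine ContinuousOn.intervalIntegrable fun r hr => ContinuousAt.continuousWithinAt ?_
    have hr0 := hpos r hr
    refine ContinuousAt.mul ?_ (ContinuousAt.pow ?_ l)
    · exact ContinuousAt.cpow Complex.continuous_ofReal.continuousAt continuousAt_const
        (Or.inl (by simpa using hr0))
    · exact Complex.continuous_ofReal.continuousAt.comp (Real.continuousAt_log hr0.ne')
  · intro y hy
    have hy' : 0 < ‖y‖ := norm_pos_iff.2 hy
    by_cases h : a ≤ ‖y‖ ∧ ‖y‖ < b
    · rw [if_pos h, Set.indicator_of_mem (show ‖y‖ ∈ Set.Ico a b from h),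
        hf _ (by positivity) y hy, multiPow_smul n _ y j α hα, logFun]
      have : (‖y‖ : ℂ) ≠ 0 := by exact_mod_cast hy'.ne'
      push_cast
      rw [inv_pow]
      field_simp
    · rw [if_neg h, Set.indicator_of_notMem (show ‖y‖ ∉ Set.Ico a b from h), mul_zero]

lemma annulus_integrable (n : ℕ) (m : ℂ) (f : Euc n → ℂ)
    (hc : ContinuousOn f {y : Euc n | y ≠ 0}) (l : ℕ) (a b : ℝ) (ha : 0 < a)
    (P : Euc n → ℂ) (hP : Continuous P) :
    Integrable fun y => if a ≤ ‖y‖ ∧ ‖y‖ < b then logFun n m f l y * P y else 0 := by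
  have hK : IsCompact {y : Euc n | a ≤ ‖y‖ ∧ ‖y‖ ≤ b} := by
    refine (isCompact_closedBall (0 : Euc n) b).of_isClosed_subset ?_ fun y hy => ?_
    · exact (isClosed_le continuous_const continuous_norm).inter
        (isClosed_le continuous_norm continuous_const)
    · simpa using hy.2
  have hcont : ContinuousOn (fun y => logFun n m f l y * P y)
      {y : Euc n | a ≤ ‖y‖ ∧ ‖y‖ ≤ b} :=
    ((logFun_continuousOn n m f hc l).mono fun y hy => norm_pos_iff.1 (ha.trans_le hy.1)).mul
      hP.continuousOn
  have h := (hcont.integrableOn_compact (μ := volume) hK).mono_set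
    (show {y : Euc n | a ≤ ‖y‖ ∧ ‖y‖ < b} ⊆ _ from fun y hy => ⟨hy.1, hy.2.le⟩)
  have hm : MeasurableSet {y : Euc n | a ≤ ‖y‖ ∧ ‖y‖ < b} :=
    (measurableSet_le measurable_const measurable_norm).inter
      (measurableSet_lt measurable_norm measurable_const)
  refine (h.integrable_indicator hm).congr (Eventually.of_forall fun y => ?_)
  simp [Set.indicator]

/-! ### Independence of the cut-off radius, homogeneity, continuity -/

lemma mul_taylorPart_eq_sum (n N : ℕ) (g : Euc n → ℂ) (c : ℂ) (y : Euc n) :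
    c * taylorPart n N g y = ∑ j ∈ Finset.range N, ∑ α ∈ Finset.Nat.antidiagonalTuple n j,
      multiDeriv n α g 0 / (multiFact n α : ℂ) * (c * multiPow n y α) := by
  unfold taylorPart
  simp only [Finset.mul_sum]
  refine Finset.sum_congr rfl fun j _ => Finset.sum_congr rfl fun α _ => ?_
  ring

/-- The integral of `|y|^m (log |y|)^l f(y)` times the Taylor polynomial over an annulus is the
difference of the finite parts at the two radii. -/
lemma annulus_taylor (n : ℕ) (hn : 1 ≤ n) (m : ℂ) (hm : ∀ j : ℕ, m ≠ -(n : ℂ) - (j : ℂ))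
    (f : Euc n → ℂ) (hc : ContinuousOn f {y : Euc n | y ≠ 0})
    (hf : ∀ t : ℝ, 0 < t → ∀ y : Euc n, y ≠ 0 → f (t • y) = f y) (l N : ℕ)
    (g : Euc n → ℂ) (a b : ℝ) (ha : 0 < a) (hab : a ≤ b) :
    ∫ y, (if a ≤ ‖y‖ ∧ ‖y‖ < b then logFun n m f l y * taylorPart n N g y else 0) =
      ∑ j ∈ Finset.range N, ∑ α ∈ Finset.Nat.antidiagonalTuple n j,
        multiDeriv n α g 0 / (multiFact n α : ℂ) *
          (radPrim (m + n + j) l b - radPrim (m + n + j) l a) *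
          sphereIntegral n (fun θ => f θ * multiPow n θ α) := by
  have h1 : ∀ y : Euc n,
      (if a ≤ ‖y‖ ∧ ‖y‖ < b then logFun n m f l y * taylorPart n N g y else 0) =
      ∑ j ∈ Finset.range N, ∑ α ∈ Finset.Nat.antidiagonalTuple n j,
        multiDeriv n α g 0 / (multiFact n α : ℂ) *
          (if a ≤ ‖y‖ ∧ ‖y‖ < b then logFun n m f l y * multiPow n y α else 0) := by
    intro y
    split_ifs
    · exact mul_taylorPart_eq_sum n N g _ y
    · simp
  have hInt : ∀ α : Fin n → ℕ, Integrable fun y : Euc n =>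
      multiDeriv n α g 0 / (multiFact n α : ℂ) *
          (if a ≤ ‖y‖ ∧ ‖y‖ < b then logFun n m f l y * multiPow n y α else 0) := fun α =>
    (annulus_integrable n m f hc l a b ha _ (multiPow_continuous n α)).const_mul _
  simp only [h1]
  rw [integral_finsetSum _ fun j _ => integrable_finsetSum _ fun α _ => hInt α]
  refine Finset.sum_congr rfl fun j _ => ?_
  rw [integral_finsetSum _ fun α _ => hInt α]
  refine Finset.sum_congr rfl fun α hα => ?_
  have hs : m + n + j ≠ 0 := fun h => hm j (by linear_combination h)
  rw [integral_const_mul, annulus_integral n hn m f hf l j hs α hα a b ha hab]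
  ring

/-- Enlarging the cut-off radius from `a` to `b` changes the integrand only on the annulus. -/
lemma logFun_taylorRem_sub (n N : ℕ) (m : ℂ) (f : Euc n → ℂ) (l : ℕ) (g : Euc n → ℂ)
    (a b : ℝ) (hab : a ≤ b) (y : Euc n) :
    logFun n m f l y * taylorRem n N a g y = logFun n m f l y * taylorRem n N b g y +
      (if a ≤ ‖y‖ ∧ ‖y‖ < b then logFun n m f l y * taylorPart n N g y else 0) := by
  unfold taylorRem
  rcases lt_or_ge ‖y‖ a with h | h
  · simp [h, h.trans_le hab, not_le.2 h]
  · by_cases h2 : ‖y‖ < b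
    · simp [h, h2, not_lt.2 h]
      ring
    · simp [h2, not_lt.2 h]

lemma integrand_integrable (n : ℕ) (hn : 1 ≤ n) (m : ℂ) (f : Euc n → ℂ)
    (hc : ContinuousOn f {y : Euc n | y ≠ 0})
    (hf : ∀ t : ℝ, 0 < t → ∀ y : Euc n, y ≠ 0 → f (t • y) = f y) (l N : ℕ)
    (hN : -(n : ℝ) - m.re < (N : ℝ)) (ψ : SchwartzMap (Euc n) ℂ) (R : ℝ) (hR : 0 < R) :
    Integrable (fun y => logFun n m f l y * taylorRem n N R ψ y) := by
  have h1 := integrand_integrable_one n hn m f hc hf l N hN ψ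
  rcases le_total R 1 with h | h
  · refine (h1.add (annulus_integrable n m f hc l R 1 hR _
      (taylorPart_continuous n N ψ))).congr (Eventually.of_forall fun y => ?_)
    exact (logFun_taylorRem_sub n N m f l ψ R 1 h y).symm
  · refine (h1.sub (annulus_integrable n m f hc l 1 R one_pos _
      (taylorPart_continuous n N ψ))).congr (Eventually.of_forall fun y => ?_)
    exact sub_eq_of_eq_add (logFun_taylorRem_sub n N m f l ψ 1 R h y)

/-- The regularised pairing does not depend on the cut-off radius: on an annulus the change of the
integral is exactly compensated by the change of the radial primitives. -/
lemma regPair_indep (n : ℕ) (hn : 1 ≤ n) (m : ℂ) (hm : ∀ j : ℕ, m ≠ -(n : ℂ) - (j : ℂ))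
    (f : Euc n → ℂ) (hc : ContinuousOn f {y : Euc n | y ≠ 0})
    (hf : ∀ t : ℝ, 0 < t → ∀ y : Euc n, y ≠ 0 → f (t • y) = f y) (l N : ℕ)
    (hN : -(n : ℝ) - m.re < (N : ℝ)) (ψ : SchwartzMap (Euc n) ℂ) (R : ℝ) (hR : 0 < R) :
    regPair n N m f R l ψ = regPair n N m f 1 l ψ := by
  have key : ∀ a b : ℝ, 0 < a → a ≤ b → regPair n N m f a l ψ = regPair n N m f b l ψ := by
    intro a b ha hab
    unfold regPair
    have h1 : ∫ y, logFun n m f l y * taylorRem n N a ψ y =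
        (∫ y, logFun n m f l y * taylorRem n N b ψ y) + ∫ y,
          (if a ≤ ‖y‖ ∧ ‖y‖ < b then logFun n m f l y * taylorPart n N ψ y else 0) := by
      rw [← integral_add (integrand_integrable n hn m f hc hf l N hN ψ b (ha.trans_le hab))
        (annulus_integrable n m f hc l a b ha _ (taylorPart_continuous n N ψ))]
      exact integral_congr_ae
        (Eventually.of_forall fun y => logFun_taylorRem_sub n N m f l ψ a b hab y)
    rw [h1, annulus_taylor n hn m hm f hc hf l N ψ a b ha hab, add_assoc]
    congr 1
    rw [← Finset.sum_add_distrib]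
    refine Finset.sum_congr rfl fun j _ => ?_
    rw [← Finset.sum_add_distrib]
    refine Finset.sum_congr rfl fun α _ => ?_
    ring
  rcases le_total R 1 with h | h
  · exact key R 1 hR h
  · exact (key 1 R one_pos h).symm

/-- Scaling of the regularised pairing. The substitution `y = t x` turns the cut-off radius `1`
into `t⁻¹`, which is then moved back to `1`. -/
lemma regPair_scale (n : ℕ) (hn : 1 ≤ n) (m : ℂ) (hm : ∀ j : ℕ, m ≠ -(n : ℂ) - (j : ℂ))
    (f : Euc n → ℂ) (hc : ContinuousOn f {y : Euc n | y ≠ 0})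
    (hf : ∀ t : ℝ, 0 < t → ∀ y : Euc n, y ≠ 0 → f (t • y) = f y) (l N : ℕ)
    (hN : -(n : ℝ) - m.re < (N : ℝ)) (t : ℝ) (ht : 0 < t) (ψ φ : SchwartzMap (Euc n) ℂ)
    (hφ : ∀ y : Euc n, φ y = ((t ^ n)⁻¹ : ℝ) • ψ (t⁻¹ • y)) :
    regPair n N m f 1 l φ = (t : ℂ) ^ m * ∑ i ∈ Finset.range (l + 1),
      (l.choose i : ℂ) * (Real.log t : ℂ) ^ i * regPair n N m f 1 (l - i) ψ := by
  have htc : (t : ℂ) ≠ 0 := by exact_mod_cast ht.ne'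
  have ht' : 0 < t⁻¹ := inv_pos.2 ht
  set c : ℂ := ((t : ℂ) ^ n)⁻¹ with hcdef
  have hφ' : (⇑φ : Euc n → ℂ) = fun y => c * ψ (t⁻¹ • y) := by
    funext y
    rw [hφ, Complex.real_smul]
    push_cast
    rfl
  have hI : ∫ y, logFun n m f l y * taylorRem n N 1 φ y = (t : ℂ) ^ m *
      ∑ i ∈ Finset.range (l + 1), (l.choose i : ℂ) * (Real.log t : ℂ) ^ i *
        ∫ y, logFun n m f (l - i) y * taylorRem n N t⁻¹ ψ y := by
    have e1 : ∀ y : Euc n, logFun n m f l y * taylorRem n N 1 φ y =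
        (fun x => c * (logFun n m f l (t • x) * taylorRem n N t⁻¹ ψ x)) (t⁻¹ • y) := by
      intro y
      rw [hφ', taylorRem_scale n N c t⁻¹ ht' ψ y]
      simp only [smul_smul, mul_inv_cancel₀ ht.ne', one_smul]
      ring
    simp only [e1]
    rw [Measure.integral_comp_inv_smul_of_nonneg volume
      (fun x => c * (logFun n m f l (t • x) * taylorRem n N t⁻¹ ψ x)) ht.le, integral_const_mul]
    have e2 : ∫ x, logFun n m f l (t • x) * taylorRem n N t⁻¹ ψ x =
        ∫ x, (t : ℂ) ^ m * ∑ i ∈ Finset.range (l + 1), (l.choose i : ℂ) * (Real.log t : ℂ) ^ i *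
          (logFun n m f (l - i) x * taylorRem n N t⁻¹ ψ x) := by
      refine integral_congr_ae ?_
      filter_upwards [ae_ne_zero n hn] with x hx
      rw [logFun_smul n m f hf l t ht x hx, mul_assoc, Finset.sum_mul]
      congr 1
      refine Finset.sum_congr rfl fun i _ => ?_
      ring
    rw [e2, integral_const_mul, integral_finsetSum _ fun i _ =>
      (integrand_integrable n hn m f hc hf (l - i) N hN ψ t⁻¹ ht').const_mul _]
    simp only [integral_const_mul]
    rw [Complex.real_smul, ← mul_assoc]
    have : ((t ^ Module.finrank ℝ (Euc n) : ℝ) : ℂ) * c = 1 := by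
      rw [hcdef, finrank_euclideanSpace_fin]
      push_cast
      field_simp
    rw [this, one_mul]
  have hS : ∑ j ∈ Finset.range N, ∑ α ∈ Finset.Nat.antidiagonalTuple n j,
      multiDeriv n α φ 0 / (multiFact n α : ℂ) * radPrim (m + n + j) l 1 *
        sphereIntegral n (fun θ => f θ * multiPow n θ α) = (t : ℂ) ^ m *
      ∑ i ∈ Finset.range (l + 1), (l.choose i : ℂ) * (Real.log t : ℂ) ^ i *
        ∑ j ∈ Finset.range N, ∑ α ∈ Finset.Nat.antidiagonalTuple n j,
          multiDeriv n α ψ 0 / (multiFact n α : ℂ) * radPrim (m + n + j) (l - i) t⁻¹ *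
            sphereIntegral n (fun θ => f θ * multiPow n θ α) := by
    simp only [Finset.mul_sum]
    rw [Finset.sum_comm]
    refine Finset.sum_congr rfl fun j _ => ?_
    rw [Finset.sum_comm]
    refine Finset.sum_congr rfl fun α hα => ?_
    have hs : m + n + j ≠ 0 := fun h => hm j (by linear_combination h)
    have hP := radPrim_scale (m + n + j) hs l t⁻¹ t ht' ht
    rw [mul_inv_cancel₀ ht.ne'] at hP
    have hd : multiDeriv n α φ 0 = c * (t⁻¹ : ℂ) ^ j * multiDeriv n α ψ 0 := by
      rw [hφ', multiDeriv_scale n j α hα]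
      simp
    have hpow : (t : ℂ) ^ m * ((t : ℂ) ^ (m + n + j))⁻¹ = c * (t⁻¹ : ℂ) ^ j := by
      have htm : (t : ℂ) ^ m ≠ 0 := by simp [Complex.cpow_eq_zero_iff, htc]
      rw [Complex.cpow_add _ _ htc, Complex.cpow_add _ _ htc, Complex.cpow_natCast,
        Complex.cpow_natCast, hcdef, inv_pow]
      field_simp
    calc multiDeriv n α φ 0 / (multiFact n α : ℂ) * radPrim (m + n + j) l 1 *
          sphereIntegral n (fun θ => f θ * multiPow n θ α)
        = (t : ℂ) ^ m * (((t : ℂ) ^ (m + n + j))⁻¹ * radPrim (m + n + j) l 1) *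
          (multiDeriv n α ψ 0 / (multiFact n α : ℂ) *
            sphereIntegral n (fun θ => f θ * multiPow n θ α)) := by
          rw [← mul_assoc ((t : ℂ) ^ m), hpow, hd]
          ring
      _ = _ := by
          rw [← hP, Finset.mul_sum, Finset.sum_mul]
          refine Finset.sum_congr rfl fun i _ => ?_
          ring
  have hR : ∀ i, regPair n N m f 1 (l - i) ψ = regPair n N m f t⁻¹ (l - i) ψ := fun i =>
    (regPair_indep n hn m hm f hc hf (l - i) N hN ψ t⁻¹ ht').symm
  simp only [hR]
  unfold regPair
  rw [hI, hS, ← mul_add, ← Finset.sum_add_distrib]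
  simp only [mul_add]

lemma taylorRem_add (n N : ℕ) (R : ℝ) (ψ φ : SchwartzMap (Euc n) ℂ) (y : Euc n) :
    taylorRem n N R (ψ + φ : SchwartzMap (Euc n) ℂ) y =
      taylorRem n N R ψ y + taylorRem n N R φ y := by
  have h : taylorPart n N (ψ + φ : SchwartzMap (Euc n) ℂ) y =
      taylorPart n N ψ y + taylorPart n N φ y := by
    unfold taylorPart
    simp only [mdOp_coe, map_add, _root_.add_apply, add_mul, add_div, Finset.sum_add_distrib]
  unfold taylorRem
  rw [h, _root_.add_apply]
  split_ifs <;> ring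

lemma taylorRem_smul (n N : ℕ) (R : ℝ) (c : ℂ) (ψ : SchwartzMap (Euc n) ℂ) (y : Euc n) :
    taylorRem n N R (c • ψ : SchwartzMap (Euc n) ℂ) y = c * taylorRem n N R ψ y := by
  have h : taylorPart n N (c • ψ : SchwartzMap (Euc n) ℂ) y = c * taylorPart n N ψ y := by
    unfold taylorPart
    simp only [mdOp_coe, map_smul, _root_.smul_apply, smul_eq_mul, Finset.mul_sum, mul_div_assoc,
      mul_assoc]
  unfold taylorRem
  rw [h, _root_.smul_apply, smul_eq_mul]
  split_ifs <;> ring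

lemma exists_eval (n : ℕ) : ∃ E : TempDist n, ∀ ψ : SchwartzMap (Euc n) ℂ, E ψ = ψ 0 :=
  ⟨SchwartzMap.mkCLMtoNormedSpace (fun ψ => ψ 0) (fun _ _ => rfl) (fun _ _ => rfl)
    ⟨{(0, 0)}, 1, zero_le_one, fun ψ => by
      simpa [schwartzSeminormFamily] using SchwartzMap.norm_le_seminorm ℂ ψ 0⟩, fun _ => rfl⟩

/-- The regularised pairing is a tempered distribution. -/
lemma exists_dist (n : ℕ) (hn : 1 ≤ n) (m : ℂ)
    (f : Euc n → ℂ) (hc : ContinuousOn f {y : Euc n | y ≠ 0})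
    (hf : ∀ t : ℝ, 0 < t → ∀ y : Euc n, y ≠ 0 → f (t • y) = f y) (N : ℕ)
    (hN : -(n : ℝ) - m.re < (N : ℝ)) (l : ℕ) :
    ∃ D : TempDist n, ∀ ψ : SchwartzMap (Euc n) ℂ, D ψ = regPair n N m f 1 l ψ := by
  obtain ⟨E, hE⟩ := exists_eval n
  obtain ⟨G, s, hG, hb⟩ := integrand_bound n hn m f hc hf l N hN
  have hInt := integrand_integrable_one n hn m f hc hf l N hN
  have hA : ∃ A : TempDist n, ∀ ψ : SchwartzMap (Euc n) ℂ,
      A ψ = ∫ y, logFun n m f l y * taylorRem n N 1 ψ y := by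
    refine ⟨SchwartzMap.mkCLMtoNormedSpace
      (fun ψ => ∫ y, logFun n m f l y * taylorRem n N 1 ψ y) ?_ ?_ ?_, fun _ => rfl⟩
    · intro ψ φ
      simp only [taylorRem_add, mul_add]
      exact integral_add (hInt ψ) (hInt φ)
    · intro c ψ
      simp only [taylorRem_smul, mul_left_comm _ c]
      exact integral_const_mul _ _
    · refine ⟨s, ‖∫ y, G y‖, norm_nonneg _, fun ψ => ?_⟩
      calc ‖∫ y, logFun n m f l y * taylorRem n N 1 ψ y‖
          ≤ ∫ y, G y * s.sup (schwartzSeminormFamily ℂ (Euc n) ℂ) ψ := by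
            refine norm_integral_le_of_norm_le (hG.mul_const _) ?_
            filter_upwards [ae_ne_zero n hn] with y hy using hb ψ y hy
        _ = (∫ y, G y) * s.sup (schwartzSeminormFamily ℂ (Euc n) ℂ) ψ := integral_mul_const _ _
        _ ≤ _ := by
            gcongr
            exact Real.le_norm_self _
  obtain ⟨A, hA⟩ := hA
  refine ⟨A + ∑ j ∈ Finset.range N, ∑ α ∈ Finset.Nat.antidiagonalTuple n j,
    (radPrim (m + n + j) l 1 * sphereIntegral n (fun θ => f θ * multiPow n θ α) /
      (multiFact n α : ℂ)) • (E ∘L mdOp n α), fun ψ => ?_⟩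
  simp only [_root_.add_apply, _root_.sum_apply, _root_.smul_apply,
    ContinuousLinearMap.comp_apply, hA, hE, ← mdOp_coe, smul_eq_mul]
  unfold regPair
  congr 1
  refine Finset.sum_congr rfl fun j _ => Finset.sum_congr rfl fun α _ => ?_
  ring

/-! ### The log-homogeneous extension -/

/-- Explicit construction of the log-homogeneous extension: for
`m ∉ -n-ℕ` and `N > -n - Re m`, the pairing
`⟨U,ψ⟩ = ∫_{|y|>1} uψ + ∫_{|y|<1} u(ψ - Taylor_N ψ)`
`+ ∑_{|α|<N} ∑_{l≤k} (-1)^l l! ∂^α ψ(0)/(α!(m+n+|α|)^{l+1}) ∫_{S^{n-1}} u_l θ^α dθ`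
has absolutely convergent integrals, defines a tempered distribution which is
log-homogeneous of order `(m,k)` and extends `u`. -/
theorem statement11 (n : ℕ) (hn : 1 ≤ n) (m : ℂ)
    (hm : ∀ j : ℕ, m ≠ -(n : ℂ) - (j : ℂ)) (k : ℕ)
    (u : Euc n → ℂ) (ul : Fin (k + 1) → Euc n → ℂ)
    (hu : IsLogHomFunWith n m k u ul)
    (N : ℕ) (hN : -(n : ℝ) - m.re < (N : ℝ)) :
    (∀ ψ : SchwartzMap (Euc n) ℂ,
      IntegrableOn (fun y : Euc n => u y * ψ y) {y : Euc n | 1 < ‖y‖} ∧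
      IntegrableOn (fun y : Euc n => u y * (ψ y - taylorPart n N (⇑ψ) y))
        {y : Euc n | ‖y‖ < 1}) ∧
    ∃ U : TempDist n,
      (∀ ψ : SchwartzMap (Euc n) ℂ,
        U ψ = (∫ y in {y : Euc n | 1 < ‖y‖}, u y * ψ y) +
          (∫ y in {y : Euc n | ‖y‖ < 1}, u y * (ψ y - taylorPart n N (⇑ψ) y)) +
          ∑ j ∈ Finset.range N, ∑ α ∈ Finset.Nat.antidiagonalTuple n j,
            ∑ l : Fin (k + 1),
              ((-1 : ℂ) ^ (l : ℕ) * (Nat.factorial l : ℂ) * multiDeriv n α (⇑ψ) 0) /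
                  ((multiFact n α : ℂ) * (m + (n : ℂ) + (j : ℂ)) ^ ((l : ℕ) + 1)) *
                sphereIntegral n (fun θ => ul l θ * multiPow n θ α)) ∧
      IsLogHomDist n m k U ∧
      (∀ ψ : SchwartzMap (Euc n) ℂ, (0 : Euc n) ∉ tsupport (⇑ψ) →
        U ψ = ∫ y : Euc n, u y * ψ y) := by
  obtain ⟨husm, hul, hueq⟩ := hu
  have huc : ∀ l, ContinuousOn (ul l) {y : Euc n | y ≠ 0} := fun l => (husm l).continuousOn
  have hueq' : ∀ y : Euc n, y ≠ 0 → u y = ∑ l : Fin (k + 1), logFun n m (ul l) l y := by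
    intro y hy
    rw [hueq y hy, Finset.mul_sum]
    refine Finset.sum_congr rfl fun l _ => ?_
    rw [logFun]
    ring
  have hterm : ∀ (ψ : SchwartzMap (Euc n) ℂ) (l : Fin (k + 1)), Integrable
      (fun y => logFun n m (ul l) l y * taylorRem n N 1 ψ y) := fun ψ l =>
    integrand_integrable_one n hn m (ul l) (huc l) (hul l) l N hN ψ
  have hae : ∀ ψ : SchwartzMap (Euc n) ℂ, (fun y => u y * taylorRem n N 1 ψ y) =ᵐ[volume]
      fun y => ∑ l : Fin (k + 1), logFun n m (ul l) l y * taylorRem n N 1 ψ y := by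
    intro ψ
    filter_upwards [ae_ne_zero n hn] with y hy
    rw [hueq' y hy, Finset.sum_mul]
  have hInt : ∀ ψ : SchwartzMap (Euc n) ℂ, Integrable (fun y => u y * taylorRem n N 1 ψ y) :=
    fun ψ => (integrable_finsetSum _ fun l _ => hterm ψ l).congr (hae ψ).symm
  have hmgt : MeasurableSet {y : Euc n | 1 < ‖y‖} :=
    measurableSet_lt measurable_const measurable_norm
  have hmlt : MeasurableSet {y : Euc n | ‖y‖ < 1} :=
    measurableSet_lt measurable_norm measurable_const
  have hgt : ∀ ψ : SchwartzMap (Euc n) ℂ, Set.EqOn (fun y => u y * taylorRem n N 1 ψ y)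
      (fun y => u y * ψ y) {y : Euc n | 1 < ‖y‖} := by
    intro ψ y hy
    have hy' : ¬ ‖y‖ < 1 := not_lt.2 (le_of_lt hy)
    simp [taylorRem, hy']
  have hlt : ∀ ψ : SchwartzMap (Euc n) ℂ, Set.EqOn (fun y => u y * taylorRem n N 1 ψ y)
      (fun y => u y * (ψ y - taylorPart n N (⇑ψ) y)) {y : Euc n | ‖y‖ < 1} := by
    intro ψ y hy
    have hy' : ‖y‖ < 1 := hy
    simp [taylorRem, hy']
  have hsplit : ∀ ψ : SchwartzMap (Euc n) ℂ, ∫ y, u y * taylorRem n N 1 ψ y =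
      (∫ y in {y : Euc n | 1 < ‖y‖}, u y * ψ y) +
        ∫ y in {y : Euc n | ‖y‖ < 1}, u y * (ψ y - taylorPart n N (⇑ψ) y) := by
    intro ψ
    rw [← setIntegral_congr_fun hmgt (hgt ψ), ← setIntegral_congr_fun hmlt (hlt ψ),
      ← integral_add_compl hmlt (hInt ψ), add_comm]
    congr 1
    refine setIntegral_congr_set ?_
    -- the two sets differ by the unit sphere, which is a null set
    have hsph : ∀ᵐ y : Euc n, y ∉ Metric.sphere (0 : Euc n) 1 :=
      measure_eq_zero_iff_ae_notMem.1 (Measure.addHaar_sphere_of_ne_zero _ _ one_ne_zero)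
    filter_upwards [hsph] with y hy
    have hy' : ‖y‖ ≠ 1 := by simpa using hy
    refine propext ⟨fun h => lt_of_le_of_ne (not_lt.1 h) hy'.symm, fun h => ?_⟩
    exact not_lt.2 (le_of_lt h)
  refine ⟨fun ψ => ⟨(hInt ψ).integrableOn.congr_fun (hgt ψ) hmgt,
    (hInt ψ).integrableOn.congr_fun (hlt ψ) hmlt⟩, ?_⟩
  choose D hD using fun (l : Fin (k + 1)) =>
    exists_dist n hn m (ul l) (huc l) (hul l) N hN
  have hU : ∀ ψ : SchwartzMap (Euc n) ℂ, (∑ l : Fin (k + 1), D l l) ψ =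
      (∫ y, u y * taylorRem n N 1 ψ y) +
        ∑ j ∈ Finset.range N, ∑ α ∈ Finset.Nat.antidiagonalTuple n j,
            ∑ l : Fin (k + 1),
              ((-1 : ℂ) ^ (l : ℕ) * (Nat.factorial l : ℂ) * multiDeriv n α (⇑ψ) 0) /
                  ((multiFact n α : ℂ) * (m + (n : ℂ) + (j : ℂ)) ^ ((l : ℕ) + 1)) *
                sphereIntegral n (fun θ => ul l θ * multiPow n θ α) := by
    intro ψ
    simp only [_root_.sum_apply, hD]
    unfold regPair
    rw [integral_congr_ae (hae ψ), integral_finsetSum _ fun l _ => hterm ψ l,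
      Finset.sum_add_distrib]
    congr 1
    rw [Finset.sum_comm]
    refine Finset.sum_congr rfl fun j _ => ?_
    rw [Finset.sum_comm]
    refine Finset.sum_congr rfl fun α _ => Finset.sum_congr rfl fun l _ => ?_
    rw [radPrim_one, div_mul_div_comm]
    ring
  refine ⟨∑ l : Fin (k + 1), D l l, fun ψ => ?_, ?_, fun ψ hψ => ?_⟩
  · rw [hU, hsplit]
  · refine ⟨fun i => ∑ l : Fin (k + 1), (((l : ℕ).choose i : ℕ) : ℂ) • D l (l - i), ?_⟩
    intro t ht ψ φ hφ
    simp only [_root_.sum_apply, _root_.smul_apply, hD, smul_eq_mul, Finset.mul_sum]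
    rw [Finset.sum_comm]
    refine Finset.sum_congr rfl fun l _ => ?_
    rw [regPair_scale n hn m hm (ul l) (huc l) (hul l) l N hN t ht ψ φ hφ, Finset.mul_sum,
      Fin.sum_univ_eq_sum_range (fun i => (t : ℂ) ^ m * ((Real.log t : ℂ) ^ i *
        (((l : ℕ).choose i : ℂ) * regPair n N m (ul l) 1 (l - i) ψ))) (k + 1)]
    -- the terms with `l < i ≤ k` vanish because of the binomial coefficient
    rw [← Finset.sum_subset (Finset.range_subset_range.2 (Nat.succ_le_of_lt l.2))]
    · refine Finset.sum_congr rfl fun i _ => ?_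
      ring
    · intro i _ hi
      have : (l : ℕ) < i := by
        simp only [Finset.mem_range] at hi
        omega
      simp [Nat.choose_eq_zero_of_lt this]
  · have h0 : (⇑ψ : Euc n → ℂ) =ᶠ[nhds 0] 0 := notMem_tsupport_iff_eventuallyEq.1 hψ
    have hz : ∀ α, multiDeriv n α (⇑ψ) 0 = 0 := fun α => multiDeriv_eq_zero n α _ h0
    rw [hU]
    simp [taylorRem, taylorPart, hz]
end
end
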